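/- arXiv:1705.07604 — 2 statements merged into one kernel-verified Lean document; each statement's English description precedes it below -/
import Mathlib

section
/- The sum over all partitions λ ⊆ n^m with |λ| = p of s_λ(1^m) · s_{λ'}(1^n) equals C(mn, p) (the dimension of Λ^p(ℂ^m ⊗ ℂ^n)). -/
open YoungDiagram Finset

/-- The rectangular Young diagram with `m` rows and `n` columns. -/
def rect (m n : ℕ) : YoungDiagram where
  cells := Finset.range m ×ˢ Finset.range n
  isLowerSet := by
    rintro ⟨a1, a2⟩ ⟨b1, b2⟩ ⟨h1, h2⟩ hb
    simp only [Finset.coe_product, Set.mem_prod, Finset.mem_coe, Finset.mem_range] at *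
    exact ⟨lt_of_le_of_lt h1 hb.1, lt_of_le_of_lt h2 hb.2⟩

/-- The 180°-rotated complement of a Young diagram `μ` inside the rectangle with
`m` rows and `n` columns: its row lengths are `n - μ.rowLen (m-1-i)`. -/
def complement (m n : ℕ) (μ : YoungDiagram) : YoungDiagram where
  cells := (Finset.range m ×ˢ Finset.range n).filter fun p => p.2 < n - μ.rowLen (m - 1 - p.1)
  isLowerSet := by
    rintro ⟨a1, a2⟩ ⟨b1, b2⟩ ⟨h1, h2⟩ hb
    simp only [Finset.coe_filter, Set.mem_setOf_eq, Finset.mem_product, Finset.mem_range] at *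
    refine ⟨⟨lt_of_le_of_lt h1 hb.1.1, lt_of_le_of_lt h2 hb.1.2⟩, ?_⟩
    calc b2 ≤ a2 := h2
      _ < n - μ.rowLen (m - 1 - a1) := hb.2
      _ ≤ n - μ.rowLen (m - 1 - b1) :=
          Nat.sub_le_sub_left (μ.rowLen_anti _ _ (Nat.sub_le_sub_left h1 _)) n

/-- The hook length of the cell `c` in the Young diagram `μ` (arm + leg + 1). -/
def hookLength (μ : YoungDiagram) (c : ℕ × ℕ) : ℕ :=
  (μ.rowLen c.1 - c.2) + (μ.colLen c.2 - c.1) - 1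

/-- The product of all hook lengths of `μ`. -/
def hookProd (μ : YoungDiagram) : ℕ := ∏ c ∈ μ.cells, hookLength μ c

/-- The number of semistandard Young tableaux of shape `μ` with entries in `{0, …, k-1}`;
this equals `s_μ(1^k) = dim S^μ(ℂ^k)`. -/
noncomputable def ssytCount (μ : YoungDiagram) (k : ℕ) : ℕ :=
  Set.ncard {T : SemistandardYoungTableau μ | ∀ i j, (i, j) ∈ μ → T i j < k}

/-- `T : ℕ × ℕ → ℕ` is a standard Young tableau of shape `μ` (with entries `0, …, |μ|-1`):
it is a bijection from the cells of `μ` to `{0, …, |μ|-1}`, strictly increasing along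
rows and columns, and zero outside `μ`. -/
def IsSyt (μ : YoungDiagram) (T : ℕ × ℕ → ℕ) : Prop :=
  Set.BijOn T (μ.cells : Set (ℕ × ℕ)) (Finset.range μ.card : Set ℕ) ∧
  (∀ i j, (i, j + 1) ∈ μ → T (i, j) < T (i, j + 1)) ∧
  (∀ i j, (i + 1, j) ∈ μ → T (i, j) < T (i + 1, j)) ∧
  (∀ c, c ∉ μ → T c = 0)

/-- The number of standard Young tableaux of shape `μ`, i.e. `f^μ`. -/
noncomputable def sytCount (μ : YoungDiagram) : ℕ := Set.ncard {T | IsSyt μ T}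

section Vectors

variable {R : Type*} [CommSemiring R]

/-- Number of Gelfand-Tsetlin patterns with top row `v`. -/
def gtCount : (m : ℕ) → (Fin m → ℕ) → ℕ
  | 0, _ => 1
  | m + 1, v => ∑ u ∈ Fintype.piFinset (fun i : Fin m => Finset.Icc (v i.succ) (v i.castSucc)),
      gtCount m u

theorem gtCount_antitone {m : ℕ} {v : Fin m → ℕ} (h : gtCount m v ≠ 0) : Antitone v := by
  cases m with
  | zero => intro i; exact i.elim0
  | succ m =>
    rw [gtCount] at h
    obtain ⟨u, hu, -⟩ := Finset.exists_ne_zero_of_sum_ne_zero h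
    rw [Fin.antitone_iff_succ_le]
    intro i
    have := Fintype.mem_piFinset.1 hu i
    rw [Finset.mem_Icc] at this
    exact this.1.trans this.2

/-- one-row weight of a vertical strip -/
def vw (t : R) (a b : ℕ) : R := if b = a then 1 else if b = a + 1 then t else 0

/-- indicator -/
def ind (R : Type*) [CommSemiring R] (p : Prop) [Decidable p] : R := if p then 1 else 0

def fF (t : R) (A b c : ℕ) : R :=
  (if c ≤ b ∧ b ≤ A then 1 else 0) + (if c ≤ b + 1 ∧ b + 1 ≤ A then t else 0)

def cF (t : R) (A b : ℕ) : R :=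
  (if b ≤ A then 1 else 0) + (if b + 1 ≤ A then t else 0)

def gF (t : R) (b' a b : ℕ) : R :=
  (if b' ≤ a ∧ a ≤ b then 1 else 0) + (if b' + 1 ≤ a ∧ a ≤ b + 1 then t else 0)

theorem step (t : R) (A a b b' : ℕ) (h1 : a ≤ A) (h2 : b' ≤ b) :
    fF t A b a * cF t a b' = cF t A b * gF t b' a b := by
  unfold fF cF gF
  split_ifs <;> first | (exfalso; omega) | ring

theorem prod_id (t : R) (a b : ℕ → ℕ) (ha : Antitone a) (hb : Antitone b) (k : ℕ) :
    (∏ i ∈ range k, fF t (a i) (b i) (a (i+1))) * cF t (a k) (b k) =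
      cF t (a 0) (b 0) * ∏ i ∈ range k, gF t (b (i+1)) (a (i+1)) (b i) := by
  induction k with
  | zero => simp
  | succ k ih =>
    rw [prod_range_succ, prod_range_succ, mul_assoc,
      step t _ _ _ _ (ha (Nat.le_succ k)) (hb (Nat.le_succ k)), ← mul_assoc, ih, mul_assoc]

theorem row_sum_f (t : R) (B A b c : ℕ) (hb : b + 1 < B) :
    ∑ x ∈ range B, vw t b x * (ind R (x ≤ A) * ind R (c ≤ x)) = fF t A b c := by
  have : ∀ x ∈ range B, vw t b x * (ind R (x ≤ A) * ind R (c ≤ x)) =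
      (if x = b then (if c ≤ b ∧ b ≤ A then 1 else 0) else 0) +
      (if x = b + 1 then (if c ≤ b + 1 ∧ b + 1 ≤ A then t else 0) else 0) := by
    intro x _
    unfold vw ind
    split_ifs <;> first | (exfalso; omega) | simp
  rw [Finset.sum_congr rfl this, Finset.sum_add_distrib, Finset.sum_ite_eq', Finset.sum_ite_eq']
  rw [if_pos (Finset.mem_range.2 (by omega) : b ∈ range B),
    if_pos (Finset.mem_range.2 hb : b + 1 ∈ range B)]
  rfl

theorem row_sum_g (t : R) (B b' a b : ℕ) (ha : a < B) :
    ∑ x ∈ range B, (ind R (b' ≤ x) * ind R (x ≤ b)) * vw t x a = gF t b' a b := by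
  have : ∀ x ∈ range B, (ind R (b' ≤ x) * ind R (x ≤ b)) * vw t x a =
      (if x = a then (if b' ≤ a ∧ a ≤ b then 1 else 0) else 0) +
      (if x = a - 1 then (if b' + 1 ≤ a ∧ a ≤ b + 1 then t else 0) else 0) := by
    intro x _
    unfold vw ind
    split_ifs <;> first | (exfalso; omega) | simp
  rw [Finset.sum_congr rfl this, Finset.sum_add_distrib, Finset.sum_ite_eq', Finset.sum_ite_eq']
  rw [if_pos (Finset.mem_range.2 ha : a ∈ range B),
    if_pos (Finset.mem_range.2 (by omega) : a - 1 ∈ range B)]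
  rfl

def VW (t : R) {m : ℕ} (v w : Fin m → ℕ) : R := ∏ i, vw t (v i) (w i)

def HW (R : Type*) [CommSemiring R] {m : ℕ} (v : Fin (m+1) → ℕ) (u : Fin m → ℕ) : R :=
  ∏ i : Fin m, (ind R (v i.succ ≤ u i) * ind R (u i ≤ v i.castSucc))

def Box (m B : ℕ) : Finset (Fin m → ℕ) := Fintype.piFinset (fun _ => range B)

theorem prod_id_fin (t : R) (B : ℕ) {m : ℕ} (v : Fin (m+1) → ℕ) (u : Fin m → ℕ)
    (hv : Antitone v) (hu : Antitone u) (hvB : ∀ i, v i + 1 < B) (huB : ∀ i, u i < B) :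
    ∏ i : Fin (m+1), fF t ((Fin.cons B u : Fin (m+1) → ℕ) i) (v i)
        ((Fin.snoc u 0 : Fin (m+1) → ℕ) i) =
      (1 + t) * ∏ i : Fin m, gF t (v i.succ) (u i) (v i.castSucc) := by
  let a : ℕ → ℕ := fun i => if i = 0 then B else if h : i - 1 < m then u ⟨i - 1, h⟩ else 0
  let b : ℕ → ℕ := fun i => if h : i < m + 1 then v ⟨i, h⟩ else 0
  have ha : Antitone a := by
    apply antitone_nat_of_succ_le
    intro n
    simp only [a]
    rcases n with _ | n
    · rw [if_neg (by omega), if_pos rfl]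
      split_ifs
      · exact (huB _).le
      · exact Nat.zero_le _
    · simp only [Nat.add_sub_cancel]
      split_ifs <;> first | omega | skip
      apply hu; simp
  have hb : Antitone b := by
    apply antitone_nat_of_succ_le
    intro n
    simp only [b]
    split_ifs <;> first | omega | skip
    apply hv; simp
  have key := prod_id t a b ha hb m
  have e1 : cF t (a m) (b m) = fF t (a m) (b m) (a (m+1)) := by
    have : a (m+1) = 0 := by simp [a]
    rw [this]; simp [cF, fF]
  rw [e1, ← prod_range_succ (fun i => fF t (a i) (b i) (a (i+1)))] at key
  have e2 : cF t (a 0) (b 0) = 1 + t := by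
    have h0 : b 0 + 1 < B := by simpa [b] using hvB 0
    have : a 0 = B := by simp [a]
    rw [this, cF, if_pos (by omega), if_pos (by omega)]
  rw [e2, ← Fin.prod_univ_eq_prod_range (fun i => fF t (a i) (b i) (a (i+1))),
    ← Fin.prod_univ_eq_prod_range (fun i => gF t (b (i+1)) (a (i+1)) (b i))] at key
  have hbv : ∀ i : Fin (m+1), v i = b i := fun i => by simp only [b, dif_pos i.2]
  have hau : ∀ i : Fin m, u i = a (i+1) := fun i => by simp [a]
  have hcons : ∀ i : Fin (m+1), (Fin.cons B u : Fin (m+1) → ℕ) i = a i := by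
    intro i
    refine Fin.cases ?_ (fun j => ?_) i
    · simp [a]
    · simp [a]
  have hsnoc : ∀ i : Fin (m+1), (Fin.snoc u 0 : Fin (m+1) → ℕ) i = a (i+1) := by
    intro i
    refine Fin.lastCases ?_ (fun j => ?_) i
    · simp [a]
    · simp [a]
  simp only [hcons, hsnoc, hbv, hau]
  exact key

theorem local_rule (t : R) (B : ℕ) {m : ℕ} (v : Fin (m+1) → ℕ) (u : Fin m → ℕ)
    (hv : Antitone v) (hu : Antitone u) (hvB : ∀ i, v i + 1 < B) (huB : ∀ i, u i < B) :
    ∑ w ∈ Box (m+1) B, VW t v w * HW R w u =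
      (1 + t) * ∑ k ∈ Box m B, HW R v k * VW t k u := by
  have h1 : ∑ w ∈ Box (m+1) B, VW t v w * HW R w u =
      ∏ i : Fin (m+1), fF t ((Fin.cons B u : Fin (m+1) → ℕ) i) (v i)
        ((Fin.snoc u 0 : Fin (m+1) → ℕ) i) := by
    have : ∀ i : Fin (m+1), fF t ((Fin.cons B u : Fin (m+1) → ℕ) i) (v i)
        ((Fin.snoc u 0 : Fin (m+1) → ℕ) i) = _ := fun i => (row_sum_f t B _ _ _ (hvB i)).symm
    rw [Finset.prod_congr rfl (fun i _ => this i), Finset.prod_univ_sum]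
    apply Finset.sum_congr rfl
    intro w hw
    have hwB : ∀ i, w i < B := fun i => by simpa using Fintype.mem_piFinset.1 hw i
    rw [Finset.prod_mul_distrib, Finset.prod_mul_distrib]
    unfold VW HW
    congr 1
    rw [Finset.prod_mul_distrib]
    congr 1
    · rw [Fin.prod_univ_succ]
      simp [ind, (hwB 0).le]
    · rw [Fin.prod_univ_castSucc]
      simp [ind]
  have h2 : ∑ k ∈ Box m B, HW R v k * VW t k u =
      ∏ i : Fin m, gF t (v i.succ) (u i) (v i.castSucc) := by
    have : ∀ i : Fin m, gF t (v i.succ) (u i) (v i.castSucc) = _ :=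
      fun i => (row_sum_g t B _ _ _ (huB i)).symm
    rw [Finset.prod_congr rfl (fun i _ => this i), Finset.prod_univ_sum]
    apply Finset.sum_congr rfl
    intro w _
    rw [Finset.prod_mul_distrib]
    rfl
  rw [h1, h2, prod_id_fin t B v u hv hu hvB huB]

theorem HW_ite {m : ℕ} (v : Fin (m+1) → ℕ) (u : Fin m → ℕ) :
    HW R v u = if (∀ i : Fin m, v i.succ ≤ u i ∧ u i ≤ v i.castSucc) then 1 else 0 := by
  unfold HW
  split_ifs with h
  · apply Finset.prod_eq_one
    intro i _
    simp [ind, h i]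
  · push Not at h
    obtain ⟨i, hi⟩ := h
    apply Finset.prod_eq_zero (Finset.mem_univ i)
    unfold ind
    split_ifs <;> first | (exfalso; omega) | simp

theorem gtCount_succ_box {m : ℕ} (B : ℕ) (v : Fin (m+1) → ℕ) (hvB : ∀ i, v i < B) :
    (gtCount (m+1) v : R) = ∑ u ∈ Box m B, HW R v u * gtCount m u := by
  rw [gtCount, Nat.cast_sum]
  simp only [HW_ite, ite_mul, one_mul, zero_mul]
  rw [← Finset.sum_filter]
  apply Finset.sum_congr _ (fun _ _ => rfl)
  ext u
  simp only [Box, Fintype.mem_piFinset, Finset.mem_filter, Finset.mem_Icc, Finset.mem_range]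
  exact ⟨fun h => ⟨fun i => (h i).2.trans_lt (hvB _), h⟩, fun h => h.2⟩

theorem pieri_box (t : R) (m : ℕ) : ∀ (B : ℕ) (v : Fin m → ℕ), Antitone v → (∀ i, v i + 1 < B) →
    ∑ w ∈ Box m B, VW t v w * gtCount m w = (1 + t) ^ m * gtCount m v := by
  induction m with
  | zero =>
    intro B v _ _
    simp [Box, VW, gtCount]
  | succ m ih =>
    intro B v hv hvB
    calc ∑ w ∈ Box (m+1) B, VW t v w * gtCount (m+1) w
        = ∑ w ∈ Box (m+1) B, ∑ u ∈ Box m B, VW t v w * HW R w u * gtCount m u := by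
          apply Finset.sum_congr rfl
          intro w hw
          have hwB : ∀ i, w i < B := fun i => by simpa using Fintype.mem_piFinset.1 hw i
          rw [gtCount_succ_box B w hwB, Finset.mul_sum]
          simp only [mul_assoc]
      _ = ∑ u ∈ Box m B, (∑ w ∈ Box (m+1) B, VW t v w * HW R w u) * gtCount m u := by
          rw [Finset.sum_comm]
          simp only [Finset.sum_mul]
      _ = ∑ u ∈ Box m B, ((1 + t) * ∑ k ∈ Box m B, HW R v k * VW t k u) * gtCount m u := by
          apply Finset.sum_congr rfl
          intro u hu
          have huB : ∀ i, u i < B := fun i => by simpa using Fintype.mem_piFinset.1 hu i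
          by_cases h : gtCount m u = 0
          · simp [h]
          · rw [local_rule t B v u hv (gtCount_antitone h) hvB huB]
      _ = (1 + t) * ∑ k ∈ Box m B, HW R v k * ∑ u ∈ Box m B, VW t k u * gtCount m u := by
          simp only [Finset.mul_sum, Finset.sum_mul, mul_assoc]
          rw [Finset.sum_comm]
      _ = (1 + t) * ∑ k ∈ Box m B, HW R v k * ((1 + t) ^ m * gtCount m k) := by
          congr 1
          apply Finset.sum_congr rfl
          intro k _
          rw [HW_ite]
          split_ifs with h
          · rw [ih B k _ (fun i => lt_of_le_of_lt (Nat.succ_le_succ (h i).2) (hvB _))]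
            intro i j hij
            rcases hij.eq_or_lt with rfl | hij
            · exact le_rfl
            · refine (h j).2.trans (le_trans (hv ?_) (h i).1)
              rw [Fin.le_def]; simp; exact hij
          · simp
      _ = _ := by
          rw [gtCount_succ_box (R := R) B v (fun i => by have := hvB i; omega), pow_succ,
            Finset.mul_sum, Finset.mul_sum]
          apply Finset.sum_congr rfl
          intro k _
          ring

theorem VW_eq (t : R) {m : ℕ} (v w : Fin m → ℕ) :
    (∏ i, t ^ v i) * VW t v w =
      if (∀ i, v i ≤ w i ∧ w i ≤ v i + 1) then ∏ i, t ^ w i else 0 := by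
  unfold VW
  split_ifs with h
  · rw [← Finset.prod_mul_distrib]
    apply Finset.prod_congr rfl
    intro i _
    have := h i
    unfold vw
    split_ifs with h1 h2
    · simp [h1]
    · rw [h2, pow_succ]
    · omega
  · push Not at h
    obtain ⟨i, hi⟩ := h
    suffices h0 : ∏ i, vw t (v i) (w i) = 0 by rw [h0, mul_zero]
    apply Finset.prod_eq_zero (Finset.mem_univ i)
    unfold vw
    split_ifs <;> first | (exfalso; omega) | rfl

theorem pieri_vec (t : R) (m : ℕ) (v : Fin m → ℕ) (hv : Antitone v) :
    ∑ w ∈ Fintype.piFinset (fun i => Finset.Icc (v i) (v i + 1)), t ^ (∑ i, w i) * gtCount m w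
      = (1 + t) ^ m * (t ^ (∑ i, v i) * gtCount m v) := by
  have hB : ∀ i, v i + 1 < (∑ i, v i) + 2 := fun i => by
    have := Finset.single_le_sum (f := v) (fun _ _ => Nat.zero_le _) (Finset.mem_univ i)
    omega
  have key := pieri_box t m _ v hv hB
  rw [mul_left_comm, ← key, Finset.mul_sum, ← Finset.prod_pow_eq_pow_sum]
  simp only [← mul_assoc, VW_eq, ite_mul, zero_mul]
  rw [← Finset.sum_filter]
  apply Finset.sum_congr
  · ext w
    simp only [Box, Fintype.mem_piFinset, Finset.mem_filter, Finset.mem_Icc, Finset.mem_range]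
    exact ⟨fun h => ⟨fun i => lt_of_le_of_lt (h i).2 (hB i), h⟩, fun h => h.2⟩
  · intro w _
    rw [Finset.prod_pow_eq_pow_sum]

end Vectors

section Tableaux

theorem finite_ssyt (μ : YoungDiagram) (k : ℕ) :
    {T : SemistandardYoungTableau μ | ∀ i j, (i, j) ∈ μ → T i j < k}.Finite := by
  let F : {T : SemistandardYoungTableau μ | ∀ i j, (i, j) ∈ μ → T i j < k} →
      (μ.cells → Fin k) := fun T c => ⟨T.1 c.1.1 c.1.2, T.2 _ _ ((mem_cells _).1 c.2)⟩
  have : Function.Injective F := by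
    intro T T' h
    apply Subtype.ext
    ext i j
    by_cases hc : (i, j) ∈ μ
    · have := congrFun h ⟨(i, j), (mem_cells _).2 hc⟩
      simpa [F] using this
    · rw [T.1.zeros hc, T'.1.zeros hc]
  exact Set.finite_coe_iff.1 (Finite.of_injective F this)

theorem finite_le (μ : YoungDiagram) : {κ : YoungDiagram | κ ≤ μ}.Finite := by
  refine Set.Finite.of_finite_image (f := fun κ : YoungDiagram => κ.cells) ?_ ?_
  · apply (μ.cells.powerset.finite_toSet).subset
    rintro _ ⟨κ, hκ, rfl⟩
    simpa using hκ
  · intro a _ b _ h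
    exact YoungDiagram.ext h

/-- Diagrams contained in `μ`. -/
noncomputable def sub (μ : YoungDiagram) : Finset YoungDiagram := (finite_le μ).toFinset

theorem mem_sub {κ μ : YoungDiagram} : κ ∈ sub μ ↔ κ ≤ μ := by simp [sub]

/-- `μ / κ` is a horizontal strip. -/
def HS (κ μ : YoungDiagram) : Prop := κ ≤ μ ∧ ∀ i j, (i + 1, j) ∈ μ → (i, j) ∈ κ

/-- the sub-shape of entries `< k` -/
def shapeLT {μ : YoungDiagram} (k : ℕ) (T : SemistandardYoungTableau μ) : YoungDiagram where
  cells := μ.cells.filter (fun c => T c.1 c.2 < k)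
  isLowerSet := by
    rintro ⟨a1, a2⟩ ⟨b1, b2⟩ ⟨h1, h2⟩ hb
    simp only [Finset.coe_filter, Set.mem_ofPred_eq, mem_cells] at *
    change b1 ≤ a1 at h1
    change b2 ≤ a2 at h2
    refine ⟨μ.up_left_mem h1 h2 hb.1, ?_⟩
    exact ((T.row_weak_of_le h2 (μ.up_left_mem h1 le_rfl hb.1)).trans
      (T.col_weak h1 hb.1)).trans_lt hb.2

theorem mem_shapeLT {μ : YoungDiagram} {k : ℕ} {T : SemistandardYoungTableau μ} {i j : ℕ} :
    (i, j) ∈ shapeLT k T ↔ (i, j) ∈ μ ∧ T i j < k := by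
  rw [← mem_cells]
  simp [shapeLT]

def restrictT {κ μ : YoungDiagram} (h : κ ≤ μ) (T : SemistandardYoungTableau μ) :
    SemistandardYoungTableau κ where
  entry i j := if (i, j) ∈ κ then T i j else 0
  row_weak' hj hc := by
    rw [if_pos hc, if_pos (κ.up_left_mem le_rfl hj.le hc)]
    exact T.row_weak hj (h hc)
  col_strict' hj hc := by
    rw [if_pos hc, if_pos (κ.up_left_mem hj.le le_rfl hc)]
    exact T.col_strict hj (h hc)
  zeros' hc := if_neg hc

theorem restrictT_apply {κ μ : YoungDiagram} (h : κ ≤ μ) (T : SemistandardYoungTableau μ)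
    (i j : ℕ) : restrictT h T i j = if (i, j) ∈ κ then T i j else 0 := rfl

def extendT {κ μ : YoungDiagram} (h : HS κ μ) (k : ℕ) (T : SemistandardYoungTableau κ)
    (hT : ∀ i j, (i, j) ∈ κ → T i j < k) :
    SemistandardYoungTableau μ where
  entry i j := if (i, j) ∈ κ then T i j else if (i, j) ∈ μ then k else 0
  row_weak' {i j1 j2} hj hc := by
    by_cases h2 : (i, j2) ∈ κ
    · rw [if_pos h2, if_pos (κ.up_left_mem le_rfl hj.le h2)]
      exact T.row_weak hj h2
    · rw [if_neg h2, if_pos hc]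
      split_ifs with h3
      · exact (hT _ _ h3).le
      · exact le_rfl
      · exact Nat.zero_le _
  col_strict' {i1 i2 j} hi hc := by
    have h1 : (i1, j) ∈ κ := by
      obtain ⟨d, rfl⟩ : ∃ d, i2 = d + 1 := ⟨i2 - 1, by omega⟩
      exact κ.up_left_mem (by omega) le_rfl (h.2 _ _ hc)
    rw [if_pos h1]
    split_ifs with h2
    · exact T.col_strict hi h2
    · exact hT _ _ h1
  zeros' {i j} hc := by
    rw [if_neg (fun h' => hc (h.1 h')), if_neg hc]

theorem extendT_apply {κ μ : YoungDiagram} (h : HS κ μ) (k : ℕ) (T : SemistandardYoungTableau κ)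
    (hT : ∀ i j, (i, j) ∈ κ → T i j < k) (i j : ℕ) :
    extendT h k T hT i j = if (i, j) ∈ κ then T i j else if (i, j) ∈ μ then k else 0 := rfl

open Classical in
theorem branching (μ : YoungDiagram) (k : ℕ) :
    ssytCount μ (k + 1) = ∑ κ ∈ (sub μ).filter (fun κ => HS κ μ), ssytCount κ k := by
  unfold ssytCount
  rw [Set.ncard_eq_toFinset_card _ (finite_ssyt μ (k+1)),
    Finset.card_eq_sum_card_fiberwise (f := shapeLT k)
      (t := (sub μ).filter (fun κ => HS κ μ))]
  · apply Finset.sum_congr rfl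
    intro κ hκ
    have hκ' : HS κ μ := (Finset.mem_filter.1 hκ).2
    rw [← Set.ncard_coe_finset]
    apply Set.ncard_congr (fun T _ => restrictT hκ'.1 T)
    · intro T hT
      simp only [Finset.coe_filter, Set.Finite.mem_toFinset, Set.mem_ofPred_eq] at hT ⊢
      intro i j hc
      rw [restrictT_apply, if_pos hc]
      rw [← hT.2, mem_shapeLT] at hc
      exact hc.2
    · intro T T' hT hT' h
      simp only [Finset.coe_filter, Set.Finite.mem_toFinset, Set.mem_ofPred_eq] at hT hT'
      ext i j
      by_cases hc : (i, j) ∈ κ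
      · have := congrArg (fun S : SemistandardYoungTableau κ => S i j) h
        simpa [restrictT_apply, hc] using this
      · by_cases hm : (i, j) ∈ μ
        · have h1 := hT.1 i j hm
          have h2 := hT'.1 i j hm
          have h3 := hc
          rw [← hT.2, mem_shapeLT] at hc
          rw [← hT'.2, mem_shapeLT] at h3
          have h4 : ¬ T i j < k := fun h => hc ⟨hm, h⟩
          have h5 : ¬ T' i j < k := fun h => h3 ⟨hm, h⟩
          omega
        · rw [T.zeros hm, T'.zeros hm]
    · intro T hT
      simp only [Set.mem_ofPred_eq] at hT
      refine ⟨extendT hκ' k T hT, ?_, ?_⟩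
      · simp only [Finset.coe_filter, Set.Finite.mem_toFinset, Set.mem_ofPred_eq]
        constructor
        · intro i j hc
          rw [extendT_apply]
          split_ifs with h
          · exact (hT _ _ h).trans (Nat.lt_succ_self k)
          · exact Nat.lt_succ_self k
        · apply YoungDiagram.ext
          ext ⟨i, j⟩
          rw [mem_cells, mem_cells, mem_shapeLT, extendT_apply]
          constructor
          · rintro ⟨h1, h2⟩
            by_contra h3
            rw [if_neg h3, if_pos h1] at h2
            exact lt_irrefl _ h2
          · intro h
            rw [if_pos h]
            exact ⟨hκ'.1 h, hT _ _ h⟩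
      · ext i j
        rw [restrictT_apply, extendT_apply]
        split_ifs with h
        · rfl
        · rw [T.zeros h]
  · intro T hT
    simp only [Set.Finite.coe_toFinset, Set.mem_ofPred_eq] at hT
    have hle : shapeLT k T ≤ μ := by
      rintro ⟨i, j⟩ h
      exact (mem_shapeLT.1 h).1
    simp only [Finset.coe_filter, Set.mem_ofPred_eq, mem_sub]
    refine ⟨hle, hle, ?_⟩
    intro i j h
    rw [mem_shapeLT]
    refine ⟨μ.up_left_mem (Nat.le_succ i) le_rfl h, ?_⟩
    have h1 : T i j < T (i+1) j := T.col_strict (Nat.lt_succ_self i) h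
    have h2 := hT _ _ h
    omega

theorem ssytCount_eq_zero {μ : YoungDiagram} {k : ℕ} (h : (k, 0) ∈ μ) : ssytCount μ k = 0 := by
  unfold ssytCount
  rw [Set.ncard_eq_zero (finite_ssyt μ k), Set.eq_empty_iff_forall_notMem]
  intro T hT
  have key : ∀ i, (i, 0) ∈ μ → i ≤ T i 0 := by
    intro i
    induction i with
    | zero => intro _; exact Nat.zero_le _
    | succ i ih =>
      intro hi
      have h1 := ih (μ.up_left_mem (Nat.le_succ i) le_rfl hi)
      have h2 : T i 0 < T (i+1) 0 := T.col_strict (Nat.lt_succ_self i) hi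
      omega
  exact absurd (hT _ _ h) (not_lt.2 (key k h))

theorem ssytCount_bot (k : ℕ) : ssytCount ⊥ k = 1 := by
  unfold ssytCount
  rw [Set.ncard_eq_one]
  refine ⟨SemistandardYoungTableau.highestWeight ⊥, ?_⟩
  ext T
  simp only [notMem_bot, Set.mem_ofPred_eq, Set.mem_singleton_iff]
  constructor
  · intro _
    ext i j
    rw [T.zeros (notMem_bot _), SemistandardYoungTableau.zeros _ (notMem_bot _)]
  · intro _ i j h
    exact h.elim

/-- row vector -/
def rowVec (m : ℕ) (μ : YoungDiagram) : Fin m → ℕ := fun i => μ.rowLen i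

theorem rowVec_antitone (m : ℕ) (μ : YoungDiagram) : Antitone (rowVec m μ) :=
  fun _ _ h => μ.rowLen_anti _ _ h

def ofVec {m : ℕ} (v : Fin m → ℕ) (hv : Antitone v) : YoungDiagram where
  cells := (Finset.range m ×ˢ Finset.range (∑ i, v i)).filter
    (fun c => ∃ h : c.1 < m, c.2 < v ⟨c.1, h⟩)
  isLowerSet := by
    rintro ⟨a1, a2⟩ ⟨b1, b2⟩ ⟨h1, h2⟩ hb
    simp only [Finset.coe_filter, Set.mem_ofPred_eq, Finset.mem_product, Finset.mem_range] at *
    obtain ⟨⟨h3, h4⟩, h5, h6⟩ := hb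
    refine ⟨⟨by omega, by omega⟩, by omega, ?_⟩
    exact h2.trans_lt (h6.trans_le (hv h1))

theorem mem_ofVec {m : ℕ} (v : Fin m → ℕ) (hv : Antitone v) (i j : ℕ) :
    (i, j) ∈ ofVec v hv ↔ ∃ h : i < m, j < v ⟨i, h⟩ := by
  rw [← mem_cells]
  simp only [ofVec, Finset.mem_filter, Finset.mem_product, Finset.mem_range]
  constructor
  · exact fun h => h.2
  · rintro ⟨h, h'⟩
    refine ⟨⟨h, h'.trans_le ?_⟩, h, h'⟩
    exact Finset.single_le_sum (f := v) (fun _ _ => Nat.zero_le _) (Finset.mem_univ _)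

theorem rowVec_ofVec {m : ℕ} (v : Fin m → ℕ) (hv : Antitone v) : rowVec m (ofVec v hv) = v := by
  funext i
  apply eq_of_forall_lt_iff
  intro j
  unfold rowVec
  rw [← mem_iff_lt_rowLen, mem_ofVec]
  simp

theorem rowLen_ofVec {m : ℕ} (v : Fin m → ℕ) (hv : Antitone v) : (m, 0) ∉ ofVec v hv := by
  rw [mem_ofVec]
  simp

theorem mem_iff_rowVec {m : ℕ} {μ : YoungDiagram} (h : (m, 0) ∉ μ) (i j : ℕ) :
    (i, j) ∈ μ ↔ ∃ h : i < m, j < rowVec m μ ⟨i, h⟩ := by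
  unfold rowVec
  simp only [← mem_iff_lt_rowLen, exists_prop, iff_and_self]
  intro h'
  by_contra hc
  exact h (μ.up_left_mem (not_lt.1 hc) (Nat.zero_le _) h')

theorem rowVec_inj {m : ℕ} {μ ν : YoungDiagram} (hμ : (m, 0) ∉ μ) (hν : (m, 0) ∉ ν)
    (h : rowVec m μ = rowVec m ν) : μ = ν := by
  apply YoungDiagram.ext
  ext ⟨i, j⟩
  rw [mem_cells, mem_cells, mem_iff_rowVec hμ, mem_iff_rowVec hν, h]

theorem card_eq_rowVec {m : ℕ} {μ : YoungDiagram} (h : (m, 0) ∉ μ) :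
    μ.card = ∑ i, rowVec m μ i := by
  have : μ.cells = (Finset.range m).biUnion (fun i => μ.row i) := by
    ext ⟨i, j⟩
    simp only [Finset.mem_biUnion, mem_row_iff, mem_cells, Finset.mem_range]
    constructor
    · intro hc
      exact ⟨i, ((mem_iff_rowVec h i j).1 hc).1, hc, rfl⟩
    · rintro ⟨_, _, hc, _⟩
      exact hc
  unfold YoungDiagram.card rowVec
  rw [this, Finset.card_biUnion, Fin.sum_univ_eq_sum_range (fun i => μ.rowLen i)]
  · simp only [rowLen_eq_card]
  · intro a _ b _ hab
    rw [Function.onFun, Finset.disjoint_left]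
    intro c h1 h2
    rw [mem_row_iff] at h1 h2
    exact hab (h1.2.symm.trans h2.2)

theorem le_iff_rowLen {κ μ : YoungDiagram} : κ ≤ μ ↔ ∀ i, κ.rowLen i ≤ μ.rowLen i := by
  constructor
  · intro h i
    apply le_of_forall_lt
    intro j hj
    rw [← mem_iff_lt_rowLen] at hj ⊢
    exact h hj
  · rintro h ⟨i, j⟩ hc
    have hc' : (i, j) ∈ κ := hc
    show (i, j) ∈ μ
    rw [mem_iff_lt_rowLen] at hc' ⊢
    exact hc'.trans_le (h i)

theorem HS_iff {κ μ : YoungDiagram} :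
    HS κ μ ↔ ∀ i, μ.rowLen (i+1) ≤ κ.rowLen i ∧ κ.rowLen i ≤ μ.rowLen i := by
  unfold HS
  rw [le_iff_rowLen, forall_and, and_comm]
  refine and_congr_left' (forall_congr' fun i => ?_)
  simp only [mem_iff_lt_rowLen]
  exact ⟨fun h => le_of_forall_lt fun j hj => h j hj, fun h j hj => hj.trans_le h⟩

theorem rowLen_zero {m : ℕ} {μ : YoungDiagram} (h : (m, 0) ∉ μ) (i : ℕ) (hi : m ≤ i) :
    μ.rowLen i = 0 := by
  have h1 := μ.rowLen_anti m i hi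
  rw [mem_iff_lt_rowLen] at h
  omega

theorem HS_iff_vec {m : ℕ} {κ μ : YoungDiagram} (hκ : (m, 0) ∉ κ) (hμ : (m+1, 0) ∉ μ) :
    HS κ μ ↔ ∀ i : Fin m, rowVec (m+1) μ i.succ ≤ rowVec m κ i ∧
      rowVec m κ i ≤ rowVec (m+1) μ i.castSucc := by
  rw [HS_iff]
  constructor
  · intro h i
    exact h i
  · intro h i
    by_cases hi : i < m
    · exact h ⟨i, hi⟩
    · rw [rowLen_zero hκ i (by omega), rowLen_zero hμ (i+1) (by omega)]
      simp

theorem ssytCount_eq_gt (m : ℕ) : ∀ μ : YoungDiagram, (m, 0) ∉ μ →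
    ssytCount μ m = gtCount m (rowVec m μ) := by
  classical
  induction m with
  | zero =>
    intro μ h
    have : μ = ⊥ := by
      apply YoungDiagram.ext
      ext ⟨i, j⟩
      rw [mem_cells, mem_iff_rowVec h]
      simp
    rw [this, ssytCount_bot, gtCount]
  | succ m ih =>
    intro μ hμ
    rw [branching, gtCount]
    have : ∑ κ ∈ (sub μ).filter (fun κ => HS κ μ), ssytCount κ m =
        ∑ κ ∈ ((sub μ).filter (fun κ => HS κ μ)).filter (fun κ => (m, 0) ∉ κ),
          ssytCount κ m := by
      symm
      apply Finset.sum_filter_of_ne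
      intro κ _ hne hc
      exact hne (ssytCount_eq_zero hc)
    rw [this]
    apply Finset.sum_bij_ne_zero (fun κ _ _ => rowVec m κ)
    · intro κ h _
      simp only [Finset.mem_filter] at h
      rw [HS_iff_vec h.2 hμ] at h
      rw [Fintype.mem_piFinset]
      intro i
      rw [Finset.mem_Icc]
      exact h.1.2 i
    · intro κ h _ κ' h' _ he
      simp only [Finset.mem_filter] at h h'
      exact rowVec_inj h.2 h'.2 he
    · intro u hu hne
      have hanti := gtCount_antitone hne
      refine ⟨ofVec u hanti, ?_, ?_, rowVec_ofVec u hanti⟩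
      · have hs : HS (ofVec u hanti) μ := by
          rw [HS_iff_vec (rowLen_ofVec u hanti) hμ, rowVec_ofVec]
          intro i
          simpa using Fintype.mem_piFinset.1 hu i
        simp only [Finset.mem_filter, mem_sub]
        exact ⟨⟨hs.1, hs⟩, rowLen_ofVec u hanti⟩
      · rwa [ih _ (rowLen_ofVec u hanti), rowVec_ofVec]
    · intro κ h _
      simp only [Finset.mem_filter] at h
      exact ih κ h.2

/-- vertical strips -/
theorem VS_iff {ν μ : YoungDiagram} :
    HS ν.transpose μ.transpose ↔ ∀ i, ν.rowLen i ≤ μ.rowLen i ∧ μ.rowLen i ≤ ν.rowLen i + 1 := by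
  unfold HS
  rw [transpose_le_iff, le_iff_rowLen, forall_and]
  refine and_congr_right' ?_
  have hm : ∀ (ρ : YoungDiagram) (i j : ℕ), (i, j) ∈ ρ.transpose ↔ i < ρ.rowLen j := by
    intro ρ i j
    rw [mem_transpose, Prod.swap_prod_mk, mem_iff_lt_rowLen]
  simp only [hm]
  constructor
  · intro h i
    by_contra hc
    have := h (ν.rowLen i) i (by omega)
    omega
  · intro h j i hj
    have := h i
    omega

theorem VS_iff_vec {m : ℕ} {ν μ : YoungDiagram} (hν : (m, 0) ∉ ν) (hμ : (m, 0) ∉ μ) :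
    HS ν.transpose μ.transpose ↔
      ∀ i, rowVec m ν i ≤ rowVec m μ i ∧ rowVec m μ i ≤ rowVec m ν i + 1 := by
  rw [VS_iff]
  constructor
  · intro h i
    exact h i
  · intro h i
    by_cases hi : i < m
    · exact h ⟨i, hi⟩
    · rw [rowLen_zero hν i (by omega), rowLen_zero hμ i (by omega)]
      simp

theorem le_rect_iff {m n : ℕ} {μ : YoungDiagram} :
    μ ≤ rect m n ↔ (m, 0) ∉ μ ∧ (0, n) ∉ μ := by
  have hr : ∀ i j, (i, j) ∈ rect m n ↔ i < m ∧ j < n := by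
    intro i j
    rw [← mem_cells]
    simp [rect]
  constructor
  · intro h
    refine ⟨fun h' => ?_, fun h' => ?_⟩
    · have := (hr _ _).1 (h h'); omega
    · have := (hr _ _).1 (h h'); omega
  · rintro ⟨h1, h2⟩ ⟨i, j⟩ hc
    have hc' : (i, j) ∈ μ := hc
    show (i, j) ∈ rect m n
    rw [hr]
    constructor
    · by_contra h
      exact h1 (μ.up_left_mem (by omega) (by omega) hc')
    · by_contra h
      exact h2 (μ.up_left_mem (by omega) (by omega) hc')

open Classical in
theorem pieri_yd {R : Type*} [CommSemiring R] (t : R) (m n : ℕ) (ν : YoungDiagram)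
    (hν : ν ≤ rect m n) :
    ∑ μ ∈ (sub (rect m (n+1))).filter (fun μ => HS ν.transpose μ.transpose),
      t ^ μ.card * (ssytCount μ m : R) = (1 + t) ^ m * (t ^ ν.card * (ssytCount ν m : R)) := by
  rw [le_rect_iff] at hν
  rw [ssytCount_eq_gt m ν hν.1, card_eq_rowVec hν.1, ← pieri_vec t m _ (rowVec_antitone m ν)]
  apply Finset.sum_bij_ne_zero (fun κ _ _ => rowVec m κ)
  · intro κ h _
    simp only [Finset.mem_filter, mem_sub, le_rect_iff] at h
    rw [VS_iff_vec hν.1 h.1.1] at h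
    rw [Fintype.mem_piFinset]
    intro i
    rw [Finset.mem_Icc]
    exact h.2 i
  · intro κ h _ κ' h' _ he
    simp only [Finset.mem_filter, mem_sub, le_rect_iff] at h h'
    exact rowVec_inj h.1.1 h'.1.1 he
  · intro u hu hne
    have hanti : Antitone u := by
      apply gtCount_antitone
      intro h
      rw [h] at hne
      simp at hne
    refine ⟨ofVec u hanti, ?_, ?_, rowVec_ofVec u hanti⟩
    · have hs : HS ν.transpose (ofVec u hanti).transpose := by
        rw [VS_iff_vec hν.1 (rowLen_ofVec u hanti), rowVec_ofVec]
        intro i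
        simpa using Fintype.mem_piFinset.1 hu i
      simp only [Finset.mem_filter, mem_sub, le_rect_iff]
      refine ⟨⟨rowLen_ofVec u hanti, ?_⟩, hs⟩
      intro hc
      have h0 := (VS_iff.1 hs 0).2
      rw [mem_iff_lt_rowLen] at hc
      have h3 := hν.2
      rw [mem_iff_lt_rowLen] at h3
      omega
    · rwa [ssytCount_eq_gt m _ (rowLen_ofVec u hanti), card_eq_rowVec (rowLen_ofVec u hanti),
        rowVec_ofVec]
  · intro κ h _
    simp only [Finset.mem_filter, mem_sub, le_rect_iff] at h
    rw [ssytCount_eq_gt m _ h.1.1, card_eq_rowVec h.1.1]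

open Classical in
theorem branching_transpose (m n : ℕ) (μ : YoungDiagram) (hμ : μ ≤ rect m (n+1)) :
    ssytCount μ.transpose (n+1) =
      ∑ ν ∈ (sub (rect m n)).filter (fun ν => HS ν.transpose μ.transpose),
        ssytCount ν.transpose n := by
  rw [branching]
  rw [le_rect_iff] at hμ
  symm
  apply Finset.sum_bij_ne_zero (fun ν _ _ => ν.transpose)
  · intro ν h _
    simp only [Finset.mem_filter, mem_sub] at h ⊢
    exact ⟨h.2.1, h.2⟩
  · intro ν _ _ ν' _ _ h
    exact transpose_eq_iff.1 h
  · intro κ hκ hne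
    simp only [Finset.mem_filter, mem_sub] at hκ
    refine ⟨κ.transpose, ?_, ?_, transpose_transpose κ⟩
    · simp only [Finset.mem_filter, mem_sub, le_rect_iff, transpose_transpose]
      refine ⟨⟨?_, ?_⟩, hκ.2⟩
      · intro hc
        have := hκ.1 (mem_transpose.1 hc)
        exact hμ.1 (mem_transpose.1 this)
      · intro hc
        exact hne (ssytCount_eq_zero (mem_transpose.1 hc))
    · rwa [transpose_transpose]
  · intro ν _ _
    rfl

theorem gen_fun {R : Type*} [CommSemiring R] (t : R) (m n : ℕ) :
    ∑ μ ∈ sub (rect m n), t ^ μ.card * (ssytCount μ m : R) * (ssytCount μ.transpose n : R)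
      = (1 + t) ^ (m * n) := by
  classical
  induction n with
  | zero =>
    have h1 : sub (rect m 0) = {⊥} := by
      ext μ
      rw [mem_sub, Finset.mem_singleton]
      have : rect m 0 = ⊥ := by
        apply YoungDiagram.ext
        simp [rect]
      rw [this, le_bot_iff]
    have h2 : (⊥ : YoungDiagram).transpose = ⊥ := by
      apply YoungDiagram.ext
      ext c
      rw [mem_cells, mem_transpose]
      simp
    rw [h1, Finset.sum_singleton, h2, ssytCount_bot, ssytCount_bot]
    simp [YoungDiagram.card]
  | succ n ih =>
    calc _ = ∑ μ ∈ sub (rect m (n+1)), ∑ ν ∈ sub (rect m n),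
          (if HS ν.transpose μ.transpose then
            t ^ μ.card * (ssytCount μ m : R) * (ssytCount ν.transpose n : R) else 0) := by
          apply Finset.sum_congr rfl
          intro μ hμ
          rw [branching_transpose m n μ (mem_sub.1 hμ), Nat.cast_sum, Finset.mul_sum,
            Finset.sum_filter]
      _ = ∑ ν ∈ sub (rect m n), (1 + t) ^ m * (t ^ ν.card * (ssytCount ν m : R)) *
            (ssytCount ν.transpose n : R) := by
          rw [Finset.sum_comm]
          apply Finset.sum_congr rfl
          intro ν hν
          rw [← pieri_yd t m n ν (mem_sub.1 hν), Finset.sum_mul, Finset.sum_filter]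
      _ = (1 + t) ^ m * ∑ ν ∈ sub (rect m n), t ^ ν.card * (ssytCount ν m : R) *
            (ssytCount ν.transpose n : R) := by
          rw [Finset.mul_sum]
          simp only [mul_assoc]
      _ = _ := by rw [ih, Nat.mul_succ, pow_add, mul_comm]

end Tableaux

/-- skew Howe duality on dimensions:
`∑_{λ ⊆ n^m, |λ| = p} s_λ(1^m) s_{λ'}(1^n) = C(mn, p)`. -/
theorem sum_ssyt_products (m n p : ℕ) :
    (∑ᶠ (μ : YoungDiagram) (_ : μ ≤ rect m n ∧ μ.card = p),
        ssytCount μ m * ssytCount μ.transpose n) = (m * n).choose p := by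
  classical
  have hfin : {μ : YoungDiagram | μ ≤ rect m n ∧ μ.card = p}.Finite :=
    (finite_le (rect m n)).subset fun μ h => h.1
  have h1 := finsum_mem_eq_finite_toFinset_sum
    (fun μ : YoungDiagram => ssytCount μ m * ssytCount μ.transpose n) hfin
  refine h1.trans ?_
  have key := congrArg (fun q : Polynomial ℕ => q.coeff p)
    (gen_fun (Polynomial.X : Polynomial ℕ) m n)
  simp only [Polynomial.coeff_one_add_X_pow, Polynomial.finsetSum_coeff] at key
  rw [Nat.cast_id] at key
  rw [← key]
  have h2 : ∀ μ ∈ sub (rect m n), ((Polynomial.X : Polynomial ℕ) ^ μ.card *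
      (ssytCount μ m : Polynomial ℕ) * (ssytCount μ.transpose n : Polynomial ℕ)).coeff p =
      if μ.card = p then ssytCount μ m * ssytCount μ.transpose n else 0 := by
    intro μ _
    rw [mul_assoc, ← Nat.cast_mul, Polynomial.coeff_mul_natCast, Polynomial.coeff_X_pow]
    simp [eq_comm]
  rw [Finset.sum_congr rfl h2, ← Finset.sum_filter]
  apply Finset.sum_congr _ (fun _ _ => rfl)
  ext μ
  simp [mem_sub]
end

section
/- Define a probability measure on partitions λ ⊆ n^m with |λ| = p by P(λ) = s_λ(1^m) · s_{λ'}(1^n) / C(mn, p) (the distribution of a random irreducible component of Λ^p(ℂ^m ⊗ ℂ^n)). Then P(λ) also equals f^λ · f^{n^m/λ} / f^{n^m}, i.e., the probability that a uniformly random standard Young tableau of rectangular shape n^m has its entries ≤ p forming exactly the shape λ. -/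
open YoungDiagram Finset

/-- Determinant of the falling factorial matrix. -/
noncomputable def dfDet {m : ℕ} (l : Fin m → ℕ) : ℚ :=
  Matrix.det (Matrix.of fun i j : Fin m => ((l i).descFactorial j : ℚ))

/-- Vandermonde product of a finite set of naturals. -/
def vdm (A : Finset ℕ) : ℚ := ∏ a ∈ A, ∏ b ∈ A, if b < a then (a - b : ℚ) else 1

theorem dfDet_eq_vandermonde {m : ℕ} (l : Fin m → ℕ) :
    dfDet l = Matrix.det (Matrix.vandermonde fun i => (l i : ℚ)) := by
  rw [Matrix.det_eval_matrixOfPolynomials_eq_det_vandermonde (fun i => (l i : ℚ))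
    (fun i => descPochhammer ℚ i) (fun i => descPochhammer_natDegree ℚ i)
    (fun i => monic_descPochhammer ℚ i)]
  unfold dfDet
  congr 1
  ext i j
  simp [descPochhammer_eval_eq_descFactorial]

theorem dfDet_eq_vdm {m : ℕ} (l : Fin m → ℕ) (hl : StrictMono l) :
    dfDet l = vdm (univ.image l) := by
  have hinj : Set.InjOn l ((univ : Finset (Fin m)) : Set (Fin m)) := fun a _ b _ h => hl.injective h
  rw [dfDet_eq_vandermonde, Matrix.det_vandermonde, vdm, Finset.prod_image hinj]
  simp_rw [Finset.prod_image hinj]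
  rw [Finset.prod_comm]
  refine Finset.prod_congr rfl fun i _ => ?_
  rw [← Finset.prod_filter]
  refine Finset.prod_congr ?_ fun _ _ => rfl
  ext j
  simp [hl.lt_iff_lt]

theorem dfDet_eq_choose {m : ℕ} (l : Fin m → ℕ) :
    dfDet l = (∏ i : Fin m, ((i : ℕ).factorial : ℚ)) *
      Matrix.det (Matrix.of fun i j : Fin m => ((l i).choose j : ℚ)) := by
  unfold dfDet
  rw [← Matrix.det_mul_row]
  congr 1
  ext i j
  simp [Nat.descFactorial_eq_factorial_mul_choose]

theorem dfDet_eq_zero {m : ℕ} (l : Fin m → ℕ) {i j : Fin m} (h : i ≠ j) (hl : l i = l j) :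
    dfDet l = 0 := by
  unfold dfDet
  exact Matrix.det_zero_of_row_eq h (by ext k; simp [hl])

theorem df_aux (a j : ℕ) :
    (a : ℚ) * ((a - 1).descFactorial j : ℚ) = ((a : ℚ) - j) * (a.descFactorial j : ℚ) := by
  cases a with
  | zero => cases j <;> simp
  | succ k =>
    have h1 : (k + 1) * k.descFactorial j = (k + 1 - j) * (k + 1).descFactorial j := by
      rw [← Nat.succ_descFactorial_succ, Nat.descFactorial_succ]
    rcases le_or_gt j (k + 1) with h | h
    · have h2 := congrArg (Nat.cast (R := ℚ)) h1
      rw [Nat.cast_mul, Nat.cast_mul, Nat.cast_sub h] at h2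
      simpa using h2
    · rw [Nat.descFactorial_eq_zero_iff_lt.mpr h,
        Nat.descFactorial_eq_zero_iff_lt.mpr (by omega : k + 1 - 1 < j)]
      simp

theorem dfDet_branch {m : ℕ} (l : Fin m → ℕ) :
    ∑ i, (l i : ℚ) * dfDet (Function.update l i (l i - 1)) =
      (∑ i, ((l i : ℚ) - (i : ℕ))) * dfDet l := by
  have hdet : ∀ l : Fin m → ℕ, dfDet l = ∑ σ : Equiv.Perm (Fin m), ((Equiv.Perm.sign σ : ℤ) : ℚ) *
      ∏ k, ((l k).descFactorial (σ k) : ℚ) := by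
    intro l
    unfold dfDet
    rw [← Matrix.det_transpose, Matrix.det_apply']
    simp
  have key : ∀ i, (l i : ℚ) * dfDet (Function.update l i (l i - 1)) =
      ∑ σ : Equiv.Perm (Fin m), ((Equiv.Perm.sign σ : ℤ) : ℚ) *
        (((l i : ℚ) - (σ i : ℕ)) * ∏ k, ((l k).descFactorial (σ k) : ℚ)) := by
    intro i
    rw [hdet, Finset.mul_sum]
    refine Finset.sum_congr rfl fun σ _ => ?_
    rw [mul_left_comm]
    congr 1
    rw [← Finset.mul_prod_erase univ _ (Finset.mem_univ i),
      ← Finset.mul_prod_erase univ (fun k => ((l k).descFactorial (σ k) : ℚ)) (Finset.mem_univ i),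
      ← mul_assoc, ← mul_assoc, Function.update_self, df_aux]
    congr 1
    refine Finset.prod_congr rfl fun k hk => ?_
    rw [Function.update_of_ne (Finset.ne_of_mem_erase hk)]
  simp_rw [key]
  rw [Finset.sum_comm, hdet l, Finset.mul_sum]
  refine Finset.sum_congr rfl fun σ _ => ?_
  rw [← Finset.mul_sum, ← Finset.sum_mul, Finset.sum_sub_distrib, Finset.sum_sub_distrib,
    Equiv.sum_comp σ (fun j : Fin m => ((j : ℕ) : ℚ))]
  ring

theorem vdm_insert (A : Finset ℕ) (N : ℕ) (hA : ∀ a ∈ A, a < N) :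
    vdm (insert N A) = vdm A * ∏ a ∈ A, ((N : ℚ) - a) := by
  have hN : N ∉ A := fun h => lt_irrefl _ (hA N h)
  unfold vdm
  rw [Finset.prod_insert hN, Finset.prod_insert hN, if_neg (lt_irrefl _), one_mul, mul_comm]
  congr 1
  · refine Finset.prod_congr rfl fun a ha => ?_
    rw [Finset.prod_insert hN, if_neg (by have := hA a ha; omega), one_mul]
  · exact Finset.prod_congr rfl fun a ha => by rw [if_pos (hA a ha)]

theorem prod_range_sub (N : ℕ) : ∏ a ∈ range N, ((N : ℚ) - a) = (N.factorial : ℚ) := by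
  rw [← Finset.prod_range_reflect, ← Finset.prod_range_add_one_eq_factorial, Nat.cast_prod]
  refine Finset.prod_congr rfl fun a ha => ?_
  have := Finset.mem_range.1 ha
  rw [Nat.cast_sub (by omega), Nat.cast_sub (by omega)]
  push_cast
  ring

theorem vdm_range_succ (N : ℕ) : vdm (range (N + 1)) = vdm (range N) * N.factorial := by
  rw [Finset.range_add_one, vdm_insert _ _ (by simp), prod_range_sub]

theorem vdm_range (N : ℕ) : vdm (range N) = ∏ i ∈ range N, (i.factorial : ℚ) := by
  induction N with
  | zero => simp [vdm]
  | succ N ih => rw [vdm_range_succ, ih, Finset.prod_range_succ]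

theorem vdm_pos (A : Finset ℕ) : 0 < vdm A := by
  unfold vdm
  refine Finset.prod_pos fun a _ => Finset.prod_pos fun b _ => ?_
  split_ifs with h
  · have : (b : ℚ) < a := by exact_mod_cast h
    linarith
  · norm_num

theorem vdm_compl (N : ℕ) : ∀ A B : Finset ℕ, Disjoint A B → A ∪ B = range N →
    vdm B * ∏ a ∈ A, ((a.factorial : ℚ) * ((N - 1 - a).factorial : ℚ)) =
      vdm A * vdm (range N) := by
  induction N with
  | zero =>
    intro A B _ h
    simp only [range_zero, union_eq_empty] at h
    simp [h.1, h.2, vdm]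
  | succ N ih =>
    intro A B hd hu
    have hfac : ∀ A' : Finset ℕ, (∀ a ∈ A', a < N) →
        ∏ a ∈ A', ((a.factorial : ℚ) * ((N + 1 - 1 - a).factorial : ℚ)) =
        (∏ a ∈ A', ((a.factorial : ℚ) * ((N - 1 - a).factorial : ℚ))) *
          ∏ a ∈ A', ((N : ℚ) - a) := by
      intro A' hA'
      rw [← Finset.prod_mul_distrib]
      refine Finset.prod_congr rfl fun a ha => ?_
      have := hA' a ha
      rw [show N + 1 - 1 - a = (N - 1 - a) + 1 by omega, Nat.factorial_succ,
        show N - 1 - a + 1 = N - a by omega]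
      push_cast [Nat.cast_sub this.le]
      ring
    have hsplit : ∀ A B : Finset ℕ, Disjoint A B → A ∪ B = range (N + 1) → N ∈ A →
        ∃ A', A = insert N A' ∧ (∀ a ∈ A', a < N) ∧ (∀ b ∈ B, b < N) ∧ Disjoint A' B ∧
          A' ∪ B = range N := by
      intro A B hd hu hN
      have h1 : ∀ a, a ∈ A ∨ a ∈ B ↔ a < N + 1 := fun a => by
        rw [← Finset.mem_union, hu, Finset.mem_range]
      rw [Finset.disjoint_left] at hd
      have h2 : ∀ a ∈ A.erase N, a < N := fun a ha => by
        have := (h1 a).1 (Or.inl (Finset.mem_of_mem_erase ha))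
        have := Finset.ne_of_mem_erase ha
        omega
      have h3 : ∀ b ∈ B, b < N := fun b hb => by
        have := (h1 b).1 (Or.inr hb)
        have : b ≠ N := fun h => hd hN (h ▸ hb)
        omega
      refine ⟨A.erase N, (Finset.insert_erase hN).symm, h2, h3, ?_, ?_⟩
      · rw [Finset.disjoint_left]
        exact fun a ha => hd (Finset.mem_of_mem_erase ha)
      · ext a
        rw [Finset.mem_union, Finset.mem_range]
        constructor
        · rintro (h | h)
          · exact h2 a h
          · exact h3 a h
        · intro h
          rcases (h1 a).2 (by omega) with h' | h'
          · exact Or.inl (Finset.mem_erase.2 ⟨by omega, h'⟩)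
          · exact Or.inr h'
    have hN : N ∈ A ∪ B := by rw [hu]; simp
    rcases Finset.mem_union.1 hN with hN | hN
    · obtain ⟨A', rfl, hA, hB, hd', hu'⟩ := hsplit A B hd hu hN
      rw [Finset.prod_insert (fun h => lt_irrefl _ (hA N h)), vdm_insert _ _ hA, hfac _ hA,
        vdm_range_succ]
      have := ih A' B hd' hu'
      simp only [Nat.add_sub_cancel, Nat.sub_self, Nat.factorial_zero, Nat.cast_one, mul_one]
      linear_combination ((N.factorial : ℚ) * ∏ a ∈ A', ((N : ℚ) - a)) * this
    · obtain ⟨B', rfl, hB, hA, hd', hu'⟩ := hsplit B A hd.symm (by rw [Finset.union_comm, hu]) hN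
      rw [vdm_insert _ _ hB, hfac _ hA, vdm_range_succ, ← prod_range_sub, ← hu',
        Finset.prod_union hd']
      have := ih A B' hd'.symm (by rw [Finset.union_comm, hu'])
      rw [hu']
      linear_combination ((∏ a ∈ A, ((N : ℚ) - a)) * ∏ a ∈ B', ((N : ℚ) - a)) * this

theorem vdm_reflect (N : ℕ) (A : Finset ℕ) (hA : ∀ a ∈ A, a < N) :
    vdm (A.image fun a => N - 1 - a) = vdm A := by
  have hinj : Set.InjOn (fun a => N - 1 - a) (A : Set ℕ) := by
    intro a ha b hb h
    have := hA a ha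
    have := hA b hb
    simp only at h
    omega
  unfold vdm
  rw [Finset.prod_image hinj]
  simp_rw [Finset.prod_image hinj]
  rw [Finset.prod_comm]
  refine Finset.prod_congr rfl fun a ha => Finset.prod_congr rfl fun b hb => ?_
  have h1 := hA a ha
  have h2 := hA b hb
  by_cases h : b < a
  · rw [if_pos h, if_pos (by omega), Nat.sub_sub, Nat.sub_sub, Nat.cast_sub (by omega),
      Nat.cast_sub (by omega)]
    push_cast
    ring
  · rw [if_neg h, if_neg (by omega)]

theorem vdm_shift (N : ℕ) (A : Finset ℕ) :
    vdm (A.image fun a => N + a) = vdm A := by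
  have hinj : Set.InjOn (fun a => N + a) (A : Set ℕ) := by
    intro a ha b hb h
    simpa using h
  unfold vdm
  rw [Finset.prod_image hinj]
  simp_rw [Finset.prod_image hinj]
  simp

/-- The determinant identity behind branching of semistandard tableaux. -/
theorem chooseDet_branch {m : ℕ} (a : ℕ → ℕ) (ha : Antitone a) :
    ∑ q ∈ Fintype.piFinset (fun i : Fin m => Finset.Icc (a (m - i)) (a (m - 1 - i))),
      Matrix.det (Matrix.of fun i j : Fin m => ((q i + i).choose j : ℚ)) =
    Matrix.det (Matrix.of fun i j : Fin (m + 1) => ((a (m - i) + i).choose j : ℚ)) := by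
  have hsum : ∀ x y i j : ℕ, x ≤ y → ∑ t ∈ Finset.Icc x y, ((t + i).choose j : ℚ) =
      ((y + i + 1).choose (j + 1) : ℚ) - ((x + i).choose (j + 1) : ℚ) := by
    intro x y i j h
    induction y, h using Nat.le_induction with
    | base => 
      simp [Nat.choose_succ_succ]
    | succ y h ih =>
      rw [← Finset.insert_Icc_right_eq_Icc_add_one (by omega), Finset.sum_insert (by simp), ih,
        show y + 1 + i + 1 = (y + i + 1) + 1 by ring, Nat.choose_succ_succ (y + i + 1),
        show y + 1 + i = y + i + 1 by ring]
      push_cast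
      ring
  have hB : Matrix.det (Matrix.of fun i j : Fin (m + 1) => ((a (m - i) + i).choose j : ℚ)) =
      Matrix.det (Matrix.of (Fin.cons (fun j : Fin (m + 1) => ((a m).choose j : ℚ))
        (fun (i : Fin m) (j : Fin (m + 1)) => ((a (m - 1 - i) + i + 1).choose j : ℚ) -
          ((a (m - i) + i).choose j : ℚ)) : Fin (m + 1) → Fin (m + 1) → ℚ)) := by
    apply Matrix.det_eq_of_forall_row_eq_smul_add_pred (fun _ => 1)
    · intro j
      simp
    · intro i j
      simp [Nat.sub_sub, add_comm 1, add_assoc]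
  rw [hB, Matrix.det_succ_column_zero, Fin.sum_univ_succ,
    Finset.sum_eq_zero (s := (univ : Finset (Fin m))), add_zero]
  · have := (Matrix.detRowAlternating (R := ℚ) (n := Fin m)).toMultilinearMap.map_sum_finset
      (fun (i : Fin m) (t : ℕ) => fun j : Fin m => ((t + i).choose j : ℚ))
      (fun i : Fin m => Finset.Icc (a (m - i)) (a (m - 1 - i)))
    refine this.symm.trans ?_
    simp only [Fin.val_zero, pow_zero, one_mul, Matrix.of_apply, Fin.cons_zero,
      Nat.choose_zero_right, Nat.cast_one]
    change Matrix.det _ = Matrix.det _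
    congr 1
    ext i j
    rw [Finset.sum_apply, hsum _ _ _ _ (ha (by omega))]
    simp
  · intro i _
    simp

theorem finite_bdd (s : Finset (ℕ × ℕ)) (B : ℕ) :
    {T : ℕ × ℕ → ℕ | (∀ c ∉ s, T c = 0) ∧ ∀ c ∈ s, T c < B}.Finite := by
  refine Set.Finite.of_finite_image (f := fun T => fun c : s => T c) ?_ ?_
  · refine (Set.Finite.pi' (ι := s) (t := fun _ => Set.Iio B) fun _ => Set.finite_Iio B).subset ?_
    rintro _ ⟨T, hT, rfl⟩
    exact fun c => hT.2 c c.2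
  · intro T hT T' hT' h
    funext c
    by_cases hc : c ∈ s
    · exact congrFun h ⟨c, hc⟩
    · rw [hT.1 c hc, hT'.1 c hc]

theorem ncard_fiber {α ι : Type*} (S : Set α) (hS : S.Finite) (I : Finset ι) (A : ι → Set α)
    (h1 : ∀ x ∈ S, ∃ i ∈ I, x ∈ A i)
    (h2 : ∀ x ∈ S, ∀ i ∈ I, ∀ j ∈ I, x ∈ A i → x ∈ A j → i = j) :
    S.ncard = ∑ i ∈ I, (S ∩ A i).ncard := by
  classical
  lift S to Finset α using hS
  rw [Set.ncard_coe_finset]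
  have h3 : S = I.biUnion fun i => S.filter (fun x => x ∈ A i) := by
    ext x
    simp only [Finset.mem_biUnion, Finset.mem_filter]
    constructor
    · intro hx
      obtain ⟨i, hi, hxi⟩ := h1 x hx
      exact ⟨i, hi, hx, hxi⟩
    · rintro ⟨i, _, hx, _⟩
      exact hx
  conv_lhs => rw [h3]
  rw [Finset.card_biUnion]
  · refine Finset.sum_congr rfl fun i _ => ?_
    rw [← Set.ncard_coe_finset]
    congr 1
    ext x
    simp
  · intro i hi j hj hij
    rw [Function.onFun, Finset.disjoint_left]
    intro x hx hx'
    rw [Finset.mem_filter] at hx hx'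
    exact hij (h2 x hx.1 i hi j hj hx.2 hx'.2)

/-- Semistandard fillings with row lengths `r` and entries `< m`. -/
def ssytSet (m : ℕ) (r : ℕ → ℕ) : Set (ℕ × ℕ → ℕ) :=
  {T | (∀ i j1 j2, j1 < j2 → j2 < r i → T (i, j1) ≤ T (i, j2)) ∧
    (∀ i1 i2 j, i1 < i2 → j < r i2 → T (i1, j) < T (i2, j)) ∧
    (∀ i j, r i ≤ j → T (i, j) = 0) ∧ ∀ i j, j < r i → T (i, j) < m}

theorem ssytCount_eq (μ : YoungDiagram) (m : ℕ) :
    ssytCount μ m = (ssytSet m μ.rowLen).ncard := by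
  unfold ssytCount
  refine Set.ncard_congr (fun T _ => fun c => T c.1 c.2) ?_ ?_ ?_
  · intro T hT
    refine ⟨fun i j1 j2 h h' => T.row_weak h (mem_iff_lt_rowLen.2 h'),
      fun i1 i2 j h h' => T.col_strict h (mem_iff_lt_rowLen.2 h'), ?_, ?_⟩
    · intro i j h
      exact T.zeros (by rw [mem_iff_lt_rowLen]; exact not_lt.2 h)
    · intro i j h
      exact hT i j (mem_iff_lt_rowLen.2 h)
  · intro T T' _ _ h
    ext i j
    exact congrFun h (i, j)
  · rintro T ⟨h1, h2, h3, h4⟩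
    refine ⟨⟨fun i j => T (i, j), ?_, ?_, ?_⟩, ?_, ?_⟩
    · intro i j1 j2 h h'
      exact h1 i j1 j2 h (mem_iff_lt_rowLen.1 h')
    · intro i1 i2 j h h'
      exact h2 i1 i2 j h (mem_iff_lt_rowLen.1 h')
    · intro i j h
      rw [mem_iff_lt_rowLen] at h
      exact h3 i j (by omega)
    · intro i j h
      exact h4 i j (mem_iff_lt_rowLen.1 h)
    · rfl

theorem ssytSet_finite (m : ℕ) (r : ℕ → ℕ) (k : ℕ) (ha : Antitone r) (h0 : ∀ i, k ≤ i → r i = 0) :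
    (ssytSet m r).Finite := by
  refine (finite_bdd (range k ×ˢ range (r 0)) (m + 1)).subset ?_
  rintro T ⟨h1, h2, h3, h4⟩
  constructor
  · rintro ⟨i, j⟩ hc
    apply h3
    by_contra hlt
    apply hc
    rw [Finset.mem_product, Finset.mem_range, Finset.mem_range]
    have := ha (Nat.zero_le i)
    constructor
    · by_contra h
      have := h0 i (by simpa using h)
      omega
    · simp only; omega
  · rintro ⟨i, j⟩ _
    by_cases h : j < r i
    · have := h4 i j h
      omega
    · rw [h3 i j (by omega)]
      omega

/-- Extend a reversed list of row lengths by zero. -/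
def extRow {m : ℕ} (q : Fin m → ℕ) (a : ℕ) : ℕ :=
  if h : a < m then q ⟨m - 1 - a, by omega⟩ else 0

theorem down_closed_card (P : ℕ → Prop) (n : ℕ)
    (h : ∀ i j, i < j → j < n → P j → P i) : ∃ k ≤ n, ∀ j < n, (P j ↔ j < k) := by
  induction n with
  | zero => exact ⟨0, le_rfl, by simp⟩
  | succ n ih =>
    obtain ⟨k, hk, hP⟩ := ih fun i j h1 h2 => h i j h1 (by omega)
    by_cases hn : P n
    · refine ⟨n + 1, le_rfl, fun j hj => ⟨fun _ => hj, fun _ => ?_⟩⟩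
      rcases Nat.lt_succ_iff_lt_or_eq.1 hj with h' | rfl
      · exact h j n h' (by omega) hn
      · exact hn
    · refine ⟨k, by omega, fun j hj => ?_⟩
      rcases Nat.lt_succ_iff_lt_or_eq.1 hj with h' | rfl
      · exact hP j h'
      · exact ⟨fun h => absurd h hn, fun h => by omega⟩

theorem extRow_antitone {m : ℕ} (r : ℕ → ℕ) (hr : Antitone r) (q : Fin m → ℕ)
    (hq : q ∈ Fintype.piFinset (fun i : Fin m => Finset.Icc (r (m - i)) (r (m - 1 - i)))) :
    Antitone (extRow q) ∧ (∀ a, extRow q a ≤ r a) ∧ (∀ a < m, r (a + 1) ≤ extRow q a) ∧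
      (∀ a, m ≤ a → extRow q a = 0) := by
  rw [Fintype.mem_piFinset] at hq
  have h1 : ∀ a, extRow q a ≤ r a := by
    intro a
    unfold extRow
    split_ifs with h
    · have := (Finset.mem_Icc.1 (hq ⟨m - 1 - a, by omega⟩)).2
      rwa [show m - 1 - (m - 1 - a) = a by omega] at this
    · omega
  have h2 : ∀ a < m, r (a + 1) ≤ extRow q a := by
    intro a h
    unfold extRow
    rw [dif_pos h]
    have := (Finset.mem_Icc.1 (hq ⟨m - 1 - a, by omega⟩)).1
    rwa [show m - (m - 1 - a) = a + 1 by omega] at this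
  have h3 : ∀ a, m ≤ a → extRow q a = 0 := fun a ha => by
    unfold extRow
    rw [dif_neg (by omega)]
  refine ⟨antitone_nat_of_succ_le fun a => ?_, h1, h2, h3⟩
  by_cases h : a < m
  · exact (h1 _).trans (h2 a h)
  · rw [h3 (a + 1) (by omega)]
    omega

theorem fiber_ncard {m : ℕ} (r : ℕ → ℕ) (hr : Antitone r) (h0 : ∀ i, m + 1 ≤ i → r i = 0)
    (s : ℕ → ℕ) (hs : Antitone s) (h1 : ∀ a, s a ≤ r a) (h2 : ∀ a < m, r (a + 1) ≤ s a)
    (h3 : ∀ a, m ≤ a → s a = 0) :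
    (ssytSet (m + 1) r ∩ {T | ∀ a j, j < r a → (T (a, j) < m ↔ j < s a)}).ncard =
      (ssytSet m s).ncard := by
  have hlt : ∀ i1 i2, i1 < i2 → r i2 ≤ s i1 := by
    intro i1 i2 h
    by_cases h' : i1 < m
    · exact (hr (by omega : i1 + 1 ≤ i2)).trans (h2 i1 h')
    · rw [h0 i2 (by omega)]; omega
  refine Set.ncard_congr (fun T _ => fun c => if c.2 < s c.1 then T c else 0) ?_ ?_ ?_
  · rintro T ⟨⟨t1, t2, t3, t4⟩, t5⟩
    refine ⟨?_, ?_, ?_, ?_⟩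
    · intro i j1 j2 h h'
      simp only [if_pos h', if_pos (h.trans h')]
      exact t1 i j1 j2 h (by have := h1 i; omega)
    · intro i1 i2 j h h'
      have := hs h.le
      simp only [if_pos h', if_pos (by omega : j < s i1)]
      exact t2 i1 i2 j h (by have := h1 i2; omega)
    · intro i j h
      simp only [if_neg (by omega : ¬ j < s i)]
    · intro i j h
      simp only [if_pos h]
      exact (t5 i j (by have := h1 i; omega)).2 h
  · rintro T T' ⟨⟨t1, t2, t3, t4⟩, t5⟩ ⟨⟨u1, u2, u3, u4⟩, u5⟩ h
    funext ⟨i, j⟩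
    by_cases hj : j < s i
    · have := congrFun h (i, j)
      simpa only [if_pos hj] using this
    · by_cases hj' : j < r i
      · have a1 := t5 i j hj'
        have a2 := u5 i j hj'
        have a3 := t4 i j hj'
        have a4 := u4 i j hj'
        omega
      · rw [t3 i j (by omega), u3 i j (by omega)]
  · rintro T ⟨t1, t2, t3, t4⟩
    refine ⟨fun c => if c.2 < s c.1 then T c else if c.2 < r c.1 then m else 0,
      ⟨⟨?_, ?_, ?_, ?_⟩, ?_⟩, ?_⟩
    · intro i j1 j2 h h'
      by_cases hj2 : j2 < s i
      · simp only [if_pos hj2, if_pos (h.trans hj2)]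
        exact t1 i j1 j2 h hj2
      · simp only [if_neg hj2, if_pos h', if_pos (h.trans h')]
        split_ifs with hj1
        · exact (t4 i j1 hj1).le
        · exact le_rfl
    · intro i1 i2 j h h'
      have := hlt i1 i2 h
      simp only [if_pos (by omega : j < s i1), if_pos h']
      split_ifs with hj
      · exact t2 i1 i2 j h hj
      · exact t4 i1 j (by omega)
    · intro i j h
      have := h1 i
      simp only [if_neg (by omega : ¬ j < s i), if_neg (by omega : ¬ j < r i)]
    · intro i j h
      simp only [if_pos h]
      split_ifs with hj
      · have := t4 i j hj
        omega
      · omega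
    · intro i j h
      simp only [if_pos h]
      split_ifs with hj
      · simp [hj, t4 i j hj]
      · simp [hj]
    · funext ⟨i, j⟩
      by_cases hj : j < s i
      · simp [hj]
      · simp [hj, t3 i j (by omega)]

theorem ssytSet_formula (m : ℕ) : ∀ r : ℕ → ℕ, Antitone r → (∀ i, m ≤ i → r i = 0) →
    ((ssytSet m r).ncard : ℚ) =
      Matrix.det (Matrix.of fun i j : Fin m => ((r (m - 1 - i) + i).choose j : ℚ)) := by
  induction m with
  | zero =>
    intro r _ h0
    have : ssytSet 0 r = {fun _ => 0} := by
      ext T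
      simp only [ssytSet, Set.mem_ofPred_eq, Set.mem_singleton_iff]
      constructor
      · rintro ⟨_, _, h, _⟩
        funext ⟨i, j⟩
        exact h i j (by rw [h0 i (by omega)]; omega)
      · rintro rfl
        refine ⟨?_, ?_, ?_, ?_⟩ <;> simp [h0]
    rw [this]
    simp
  | succ m ih =>
    intro r hr h0
    rw [show (Matrix.of fun i j : Fin (m + 1) => ((r (m + 1 - 1 - i) + i).choose j : ℚ)) =
      Matrix.of fun i j : Fin (m + 1) => ((r (m - i) + i).choose j : ℚ) from rfl,
      ← chooseDet_branch r hr]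
    rw [ncard_fiber (ssytSet (m + 1) r) (ssytSet_finite _ r _ hr h0)
      (Fintype.piFinset (fun i : Fin m => Finset.Icc (r (m - i)) (r (m - 1 - i))))
      (fun q => {T | ∀ a j, j < r a → (T (a, j) < m ↔ j < extRow q a)}), Nat.cast_sum]
    · refine Finset.sum_congr rfl fun q hq => ?_
      obtain ⟨q1, q2, q3, q4⟩ := extRow_antitone r hr q hq
      rw [fiber_ncard r hr h0 _ q1 q2 q3 q4, ih _ q1 q4]
      congr 1
      ext i j
      have : extRow q (m - 1 - i) = q i := by
        unfold extRow
        rw [dif_pos (by omega)]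
        congr 1
        ext
        simp only
        omega
      simp only [Matrix.of_apply, this]
    · rintro T ⟨t1, t2, t3, t4⟩
      have hk := fun a => down_closed_card (fun j => T (a, j) < m) (r a)
        (fun i j h1 h2 h3 => lt_of_le_of_lt (t1 a i j h1 h2) h3)
      choose k hk1 hk2 using hk
      have hrow : ∀ a j, j < r a → a ≤ T (a, j) := by
        intro a
        induction a with
        | zero => intros; omega
        | succ a iha =>
          intro j hj
          have := iha j (lt_of_lt_of_le hj (hr (by omega)))
          have := t2 a (a + 1) j (by omega) hj
          omega
      refine ⟨fun i => k (m - 1 - i), ?_, ?_⟩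
      · rw [Fintype.mem_piFinset]
        intro i
        rw [Finset.mem_Icc]
        refine ⟨?_, hk1 _⟩
        by_contra hlt
        rw [not_le] at hlt
        have e : m - i = m - 1 - i + 1 := by omega
        have hle : r (m - i) ≤ r (m - 1 - i) := hr (by omega)
        have a1 := hk2 (m - 1 - i) (k (m - 1 - i)) (by omega)
        have a2 := t2 (m - 1 - i) (m - i) (k (m - 1 - i)) (by omega) hlt
        have a3 := t4 (m - i) (k (m - 1 - i)) hlt
        omega
      · intro a j hj
        unfold extRow
        split_ifs with ha
        · rw [hk2 a j hj]
          simp only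
          rw [show m - 1 - (m - 1 - a) = a by omega]
        · have := hrow a j hj
          omega
    · rintro T _ q hq q' hq' h h'
      obtain ⟨q1, q2, q3, q4⟩ := extRow_antitone r hr q hq
      obtain ⟨q1', q2', q3', q4'⟩ := extRow_antitone r hr q' hq'
      have hext : ∀ a, extRow q a = extRow q' a := by
        intro a
        have b1 := q2 a
        have b2 := q2' a
        rcases lt_trichotomy (extRow q a) (extRow q' a) with hl | hl | hl
        · have c1 := h a (extRow q a) (by omega)
          have c2 := h' a (extRow q a) (by omega)
          omega
        · exact hl
        · have c1 := h a (extRow q' a) (by omega)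
          have c2 := h' a (extRow q' a) (by omega)
          omega
      funext i
      have := hext (m - 1 - i)
      unfold extRow at this
      rw [dif_pos (by omega), dif_pos (by omega)] at this
      have e : (⟨m - 1 - (m - 1 - i), by omega⟩ : Fin m) = i := by
        ext
        simp only
        omega
      rwa [e] at this

theorem isSyt_iff (μ : YoungDiagram) (T : ℕ × ℕ → ℕ) : IsSyt μ T ↔
    (∀ c ∈ μ, T c < μ.card) ∧ (∀ c ∈ μ, ∀ d ∈ μ, T c = T d → c = d) ∧
    (∀ i j, (i, j + 1) ∈ μ → T (i, j) < T (i, j + 1)) ∧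
    (∀ i j, (i + 1, j) ∈ μ → T (i, j) < T (i + 1, j)) ∧ (∀ c, c ∉ μ → T c = 0) := by
  unfold IsSyt
  constructor
  · rintro ⟨⟨h1, h2, h3⟩, h4⟩
    refine ⟨fun c hc => ?_, fun c hc d hd h => h2 hc hd h, h4⟩
    simpa using h1 hc
  · rintro ⟨h1, h2, h4⟩
    have hm : Set.MapsTo T (μ.cells : Set (ℕ × ℕ)) (Finset.range μ.card : Set ℕ) := by
      intro c hc
      simpa using h1 c hc
    have hi : Set.InjOn T (μ.cells : Set (ℕ × ℕ)) := fun c hc d hd h => h2 c hc d hd h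
    refine ⟨⟨hm, hi, ?_⟩, h4⟩
    exact Finset.surjOn_of_injOn_of_card_le T hm hi (by simp)

theorem isSyt_finite (μ : YoungDiagram) : {T | IsSyt μ T}.Finite := by
  refine (finite_bdd μ.cells μ.card).subset ?_
  intro T hT
  rw [Set.mem_ofPred_eq, isSyt_iff] at hT
  exact ⟨fun c hc => hT.2.2.2.2 c hc, fun c hc => hT.1 c hc⟩

theorem rowLen_eq_of (μ : YoungDiagram) (i k : ℕ) (h : ∀ j, (i, j) ∈ μ ↔ j < k) :
    μ.rowLen i = k := by
  have h1 := h k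
  have h2 := h (μ.rowLen i)
  rw [mem_iff_lt_rowLen] at h1 h2
  omega

theorem card_eq_sum_rowLen (μ : YoungDiagram) (m : ℕ) (h0 : ∀ i, m ≤ i → μ.rowLen i = 0) :
    μ.card = ∑ i ∈ range m, μ.rowLen i := by
  unfold YoungDiagram.card
  rw [Finset.card_eq_sum_card_fiberwise (f := Prod.fst) (t := range m)]
  · refine Finset.sum_congr rfl fun i _ => ?_
    rw [rowLen_eq_card]
    rfl
  · rintro ⟨i, j⟩ hc
    have hc' : (i, j) ∈ μ := hc
    rw [mem_iff_lt_rowLen] at hc'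
    simp only [Finset.coe_range, Set.mem_Iio]
    by_contra h
    have := h0 i (by omega)
    omega

/-- Remove the corner in row `a`. -/
def rmCorner (μ : YoungDiagram) (a : ℕ) (h : μ.rowLen (a + 1) < μ.rowLen a) : YoungDiagram where
  cells := μ.cells.erase (a, μ.rowLen a - 1)
  isLowerSet := by
    rintro ⟨a1, a2⟩ ⟨b1, b2⟩ ⟨h1, h2⟩ hb
    simp only at h1 h2
    rw [Finset.mem_coe, Finset.mem_erase] at *
    have hm : (a1, a2) ∈ μ := hb.2
    refine ⟨?_, μ.up_left_mem h1 h2 hm⟩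
    intro he
    apply hb.1
    rw [mem_iff_lt_rowLen] at hm
    simp only [Prod.mk.injEq] at he ⊢
    have h3 : a1 = a := by
      by_contra hne
      have := μ.rowLen_anti (a + 1) a1 (by omega)
      omega
    subst h3
    omega

theorem mem_rmCorner (μ : YoungDiagram) (a : ℕ) (h : μ.rowLen (a + 1) < μ.rowLen a) (c : ℕ × ℕ) :
    c ∈ rmCorner μ a h ↔ c ≠ (a, μ.rowLen a - 1) ∧ c ∈ μ := by
  rw [← YoungDiagram.mem_cells, rmCorner, Finset.mem_erase, YoungDiagram.mem_cells]

theorem card_rmCorner (μ : YoungDiagram) (a : ℕ) (h : μ.rowLen (a + 1) < μ.rowLen a) :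
    (rmCorner μ a h).card + 1 = μ.card := by
  unfold YoungDiagram.card rmCorner
  apply Finset.card_erase_add_one
  rw [YoungDiagram.mem_cells, mem_iff_lt_rowLen]
  omega

theorem rowLen_rmCorner (μ : YoungDiagram) (a : ℕ) (h : μ.rowLen (a + 1) < μ.rowLen a) (i : ℕ) :
    (rmCorner μ a h).rowLen i = if i = a then μ.rowLen a - 1 else μ.rowLen i := by
  apply rowLen_eq_of
  intro j
  rw [mem_rmCorner, mem_iff_lt_rowLen, Ne, Prod.mk.injEq]
  split_ifs with hi
  · subst hi
    omega
  · simp [hi]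

theorem syt_fiber (μ : YoungDiagram) (a : ℕ) (h : μ.rowLen (a + 1) < μ.rowLen a) (p : ℕ)
    (hp : μ.card = p + 1) :
    ({T | IsSyt μ T} ∩ {T | T (a, μ.rowLen a - 1) = p}).ncard = sytCount (rmCorner μ a h) := by
  have hcard : (rmCorner μ a h).card = p := by
    have := card_rmCorner μ a h
    omega
  have hcm : (a, μ.rowLen a - 1) ∈ μ := by
    rw [mem_iff_lt_rowLen]
    omega
  have hr : ∀ i j, (i, j + 1) ∈ μ → (i, j) ≠ (a, μ.rowLen a - 1) := by
    intro i j hm he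
    rw [mem_iff_lt_rowLen] at hm
    rw [Prod.mk.injEq] at he
    obtain ⟨rfl, he⟩ := he
    omega
  have hc : ∀ i j, (i + 1, j) ∈ μ → (i, j) ≠ (a, μ.rowLen a - 1) := by
    intro i j hm he
    rw [mem_iff_lt_rowLen] at hm
    rw [Prod.mk.injEq] at he
    obtain ⟨rfl, he⟩ := he
    omega
  have hmem := mem_rmCorner μ a h
  generalize hcdef : (a, μ.rowLen a - 1) = c at *
  unfold sytCount
  refine Set.ncard_congr (fun T _ => Function.update T c 0) ?_ ?_ ?_
  · rintro T ⟨hT, hTc⟩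
    rw [Set.mem_ofPred_eq] at hTc
    rw [Set.mem_ofPred_eq, isSyt_iff] at hT ⊢
    obtain ⟨t1, t2, t3, t4, t5⟩ := hT
    refine ⟨?_, ?_, ?_, ?_, ?_⟩
    · intro d hd
      rw [hmem] at hd
      rw [Function.update_of_ne hd.1, hcard]
      have := t1 d hd.2
      have : T d ≠ p := fun he => hd.1 (t2 d hd.2 c hcm (by rw [he, hTc]))
      omega
    · intro d hd e he
      rw [hmem] at hd he
      rw [Function.update_of_ne hd.1, Function.update_of_ne he.1]
      exact t2 d hd.2 e he.2
    · intro i j hd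
      rw [hmem] at hd
      rw [Function.update_of_ne hd.1, Function.update_of_ne (hr i j hd.2)]
      exact t3 i j hd.2
    · intro i j hd
      rw [hmem] at hd
      rw [Function.update_of_ne hd.1, Function.update_of_ne (hc i j hd.2)]
      exact t4 i j hd.2
    · intro d hd
      rw [hmem] at hd
      by_cases hdc : d = c
      · rw [hdc, Function.update_self]
      · rw [Function.update_of_ne hdc]
        exact t5 d fun hm => hd ⟨hdc, hm⟩
  · rintro T T' ⟨_, hT⟩ ⟨_, hT'⟩ he
    rw [Set.mem_ofPred_eq] at hT hT'
    funext d
    by_cases hdc : d = c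
    · rw [hdc, hT, hT']
    · have := congrFun he d
      simpa only [Function.update_of_ne hdc] using this
  · intro T hT
    rw [Set.mem_ofPred_eq, isSyt_iff] at hT
    obtain ⟨t1, t2, t3, t4, t5⟩ := hT
    rw [hcard] at t1
    refine ⟨Function.update T c p, ⟨?_, ?_⟩, ?_⟩
    · rw [Set.mem_ofPred_eq, isSyt_iff]
      refine ⟨?_, ?_, ?_, ?_, ?_⟩
      · intro d hd
        rw [hp]
        by_cases hdc : d = c
        · rw [hdc, Function.update_self]
          omega
        · rw [Function.update_of_ne hdc]
          have := t1 d ((hmem d).2 ⟨hdc, hd⟩)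
          omega
      · intro d hd e he
        by_cases hdc : d = c
        · by_cases hec : e = c
          · intro _
            rw [hdc, hec]
          · rw [hdc, Function.update_self, Function.update_of_ne hec]
            have := t1 e ((hmem e).2 ⟨hec, he⟩)
            omega
        · by_cases hec : e = c
          · rw [hec, Function.update_self, Function.update_of_ne hdc]
            have := t1 d ((hmem d).2 ⟨hdc, hd⟩)
            omega
          · rw [Function.update_of_ne hdc, Function.update_of_ne hec]
            exact t2 d ((hmem d).2 ⟨hdc, hd⟩) e ((hmem e).2 ⟨hec, he⟩)
      · intro i j hd
        rw [Function.update_of_ne (hr i j hd)]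
        by_cases hdc : (i, j + 1) = c
        · rw [hdc, Function.update_self]
          exact t1 _ ((hmem _).2 ⟨hr i j hd, μ.up_left_mem le_rfl (by omega) hd⟩)
        · rw [Function.update_of_ne hdc]
          exact t3 i j ((hmem _).2 ⟨hdc, hd⟩)
      · intro i j hd
        rw [Function.update_of_ne (hc i j hd)]
        by_cases hdc : (i + 1, j) = c
        · rw [hdc, Function.update_self]
          exact t1 _ ((hmem _).2 ⟨hc i j hd, μ.up_left_mem (by omega) le_rfl hd⟩)
        · rw [Function.update_of_ne hdc]
          exact t4 i j ((hmem _).2 ⟨hdc, hd⟩)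
      · intro d hd
        have hdc : d ≠ c := fun he => hd (he ▸ hcm)
        rw [Function.update_of_ne hdc]
        exact t5 d fun hm => hd ((hmem d).1 hm).2
    · rw [Set.mem_ofPred_eq, Function.update_self]
    · simp only [Function.update_idem]
      rw [← t5 c (fun hm => ((hmem c).1 hm).1 rfl), Function.update_eq_self]

/-- Shifted row lengths, in increasing order. -/
def beta (m : ℕ) (μ : YoungDiagram) (i : Fin m) : ℕ := μ.rowLen (m - 1 - i) + i

theorem beta_strictMono (m : ℕ) (μ : YoungDiagram) : StrictMono (beta m μ) := by
  intro i j h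
  unfold beta
  have := μ.rowLen_anti (m - 1 - j) (m - 1 - i) (by omega)
  have : (i : ℕ) < j := h
  omega

theorem sum_beta (m : ℕ) (μ : YoungDiagram) (h0 : ∀ i, m ≤ i → μ.rowLen i = 0) :
    ∑ i, ((beta m μ i : ℚ) - (i : ℕ)) = μ.card := by
  rw [card_eq_sum_rowLen μ m h0, ← Finset.sum_range_reflect, Nat.cast_sum,
    ← Fin.sum_univ_eq_sum_range (fun i => (μ.rowLen (m - 1 - i) : ℚ))]
  refine Finset.sum_congr rfl fun i _ => ?_
  unfold beta
  push_cast
  ring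

theorem syt_formula (m p : ℕ) : ∀ μ : YoungDiagram, μ.card = p →
    (∀ i, m ≤ i → μ.rowLen i = 0) →
    (sytCount μ : ℚ) * ∏ i, ((beta m μ i).factorial : ℚ) = p.factorial * dfDet (beta m μ) := by
  induction p with
  | zero =>
    intro μ hμ h0
    have he : μ.cells = ∅ := Finset.card_eq_zero.1 hμ
    have hn : ∀ c, c ∉ μ := fun c hc => by
      rw [← YoungDiagram.mem_cells, he] at hc
      simp at hc
    have h1 : sytCount μ = 1 := by
      unfold sytCount
      rw [Set.ncard_eq_one]
      refine ⟨fun _ => 0, ?_⟩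
      ext T
      rw [Set.mem_ofPred_eq, isSyt_iff, Set.mem_singleton_iff]
      constructor
      · rintro ⟨_, _, _, _, h⟩
        funext c
        exact h c (hn c)
      · rintro rfl
        simp [hn]
    have hb : ∀ i, beta m μ i = i := by
      intro i
      unfold beta
      rw [rowLen_eq_of μ _ 0 (fun j => by simp [hn])]
      omega
    rw [h1, dfDet_eq_vdm _ (beta_strictMono m μ)]
    have : (univ : Finset (Fin m)).image (beta m μ) = range m := by
      ext x
      simp only [Finset.mem_image, Finset.mem_univ, true_and, hb, Finset.mem_range]
      constructor
      · rintro ⟨i, rfl⟩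
        exact i.2
      · intro h
        exact ⟨⟨x, h⟩, rfl⟩
    rw [this, vdm_range, ← Fin.prod_univ_eq_prod_range (fun i => (i.factorial : ℚ))]
    simp [hb]
  | succ p ih =>
    intro μ hμ h0
    have hsum := ncard_fiber {T | IsSyt μ T} (isSyt_finite μ) (univ : Finset (Fin m))
      (fun i => {T | μ.rowLen (m - 1 - i + 1) < μ.rowLen (m - 1 - i) ∧
        T (m - 1 - i, μ.rowLen (m - 1 - i) - 1) = p}) ?_ ?_
    · have hkey : ∀ i : Fin m, (({T | IsSyt μ T} ∩
          {T | μ.rowLen (m - 1 - i + 1) < μ.rowLen (m - 1 - i) ∧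
          T (m - 1 - i, μ.rowLen (m - 1 - i) - 1) = p}).ncard : ℚ) *
          ∏ i, ((beta m μ i).factorial : ℚ) = p.factorial * ((beta m μ i : ℚ) *
            dfDet (Function.update (beta m μ) i (beta m μ i - 1))) := by
        intro i
        by_cases hcor : μ.rowLen (m - 1 - i + 1) < μ.rowLen (m - 1 - i)
        · have hfib := syt_fiber μ _ hcor p hμ
          simp only [hcor, true_and]
          rw [hfib]
          have hb : beta m (rmCorner μ _ hcor) =
              Function.update (beta m μ) i (beta m μ i - 1) := by
            funext k
            by_cases hk : k = i
            · subst hk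
              rw [Function.update_self]
              unfold beta
              rw [rowLen_rmCorner, if_pos rfl]
              omega
            · rw [Function.update_of_ne hk]
              unfold beta
              rw [rowLen_rmCorner, if_neg]
              intro h
              apply hk
              ext
              omega
          have hih := ih (rmCorner μ _ hcor)
            (by have := card_rmCorner μ _ hcor; omega) (by
              intro k hk
              rw [rowLen_rmCorner, if_neg (by omega), h0 k hk])
          rw [hb] at hih
          have hfac : ∏ k, ((beta m μ k).factorial : ℚ) = (beta m μ i : ℚ) *
              ∏ k, ((Function.update (beta m μ) i (beta m μ i - 1) k).factorial : ℚ) := by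
            rw [← Finset.mul_prod_erase univ _ (Finset.mem_univ i),
              ← Finset.mul_prod_erase univ (fun k =>
                ((Function.update (beta m μ) i (beta m μ i - 1) k).factorial : ℚ))
                (Finset.mem_univ i), Function.update_self, ← mul_assoc]
            congr 1
            · have : 0 < beta m μ i := by
                unfold beta
                omega
              rw [← Nat.mul_factorial_pred this.ne']
              push_cast
              rfl
            · refine Finset.prod_congr rfl fun k hk => ?_
              rw [Function.update_of_ne (Finset.ne_of_mem_erase hk)]
          rw [hfac]
          linear_combination (beta m μ i : ℚ) * hih
        · have h1 : ({T | IsSyt μ T} ∩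
            {T | μ.rowLen (m - 1 - i + 1) < μ.rowLen (m - 1 - i) ∧
            T (m - 1 - i, μ.rowLen (m - 1 - i) - 1) = p}) = ∅ := by
            ext T
            simp [hcor]
          rw [h1, Set.ncard_empty]
          have heq : μ.rowLen (m - 1 - i + 1) = μ.rowLen (m - 1 - i) := by
            have := μ.rowLen_anti (m - 1 - i) (m - 1 - i + 1) (by omega)
            omega
          have h2 : (beta m μ i : ℚ) *
            dfDet (Function.update (beta m μ) i (beta m μ i - 1)) = 0 := by
            by_cases hi : (i : ℕ) = 0
            · have h3 : beta m μ i = 0 := by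
                have := h0 (m - 1 - i + 1) (by omega)
                unfold beta
                omega
              rw [h3]
              simp
            · have hlt : (i : ℕ) - 1 < m := by omega
              have hne : i ≠ ⟨(i : ℕ) - 1, hlt⟩ := by
                intro h
                have := congrArg Fin.val h
                simp only at this
                omega
              rw [dfDet_eq_zero _ hne, mul_zero]
              rw [Function.update_self, Function.update_of_ne hne.symm]
              unfold beta
              simp only
              rw [show m - 1 - ((i : ℕ) - 1) = m - 1 - i + 1 by omega]
              omega
          rw [h2]
          simp
      unfold sytCount
      rw [hsum, Nat.cast_sum, Finset.sum_mul]
      simp_rw [hkey]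
      rw [← Finset.mul_sum, dfDet_branch, sum_beta m μ h0, hμ, Nat.factorial_succ]
      push_cast
      ring
    · intro T hT
      obtain ⟨⟨_, _, hs⟩, t3, t4, t5⟩ := id hT
      rw [Set.mem_ofPred_eq, isSyt_iff] at hT
      have t1 := hT.1
      obtain ⟨⟨a, j⟩, hc, hTc⟩ := hs (by simp [hμ] : p ∈ ((range μ.card : Finset ℕ) : Set ℕ))
      have hc' : (a, j) ∈ μ := hc
      have hr : (a, j + 1) ∉ μ := fun h => by
        have := t1 _ h
        have := t3 _ _ h
        omega
      have hd : (a + 1, j) ∉ μ := fun h => by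
        have := t1 _ h
        have := t4 _ _ h
        omega
      rw [mem_iff_lt_rowLen] at hc' hr hd
      have ham : a < m := by
        by_contra h
        have := h0 a (by omega)
        omega
      refine ⟨⟨m - 1 - a, by omega⟩, Finset.mem_univ _, ?_⟩
      rw [Set.mem_ofPred_eq]
      simp only
      rw [show m - 1 - (m - 1 - a) = a by omega, show μ.rowLen a - 1 = j by omega]
      exact ⟨by omega, hTc⟩
    · rintro T hT i _ k _ ⟨hi, hi'⟩ ⟨hk, hk'⟩
      rw [Set.mem_ofPred_eq, isSyt_iff] at hT
      have := hT.2.1 _ (by rw [mem_iff_lt_rowLen]; omega) _ (by rw [mem_iff_lt_rowLen]; omega)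
        (hi'.trans hk'.symm)
      rw [Prod.mk.injEq] at this
      ext
      omega

theorem mem_rect (m n i j : ℕ) : (i, j) ∈ rect m n ↔ i < m ∧ j < n := by
  rw [← YoungDiagram.mem_cells, rect, Finset.mem_product, Finset.mem_range, Finset.mem_range]

theorem mem_complement (m n : ℕ) (μ : YoungDiagram) (i j : ℕ) :
    (i, j) ∈ complement m n μ ↔ i < m ∧ j < n ∧ (m - 1 - i, n - 1 - j) ∉ μ := by
  rw [← YoungDiagram.mem_cells, complement, Finset.mem_filter, Finset.mem_product,
    Finset.mem_range, Finset.mem_range, mem_iff_lt_rowLen]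
  simp only
  omega

theorem card_rect (m n : ℕ) : (rect m n).card = m * n := by
  unfold YoungDiagram.card rect
  simp

theorem card_complement (m n : ℕ) (μ : YoungDiagram) (hμ : μ ≤ rect m n) :
    (complement m n μ).card + μ.card = m * n := by
  rw [← card_rect]
  have hsub : μ.cells ⊆ (rect m n).cells := YoungDiagram.cells_subset_iff.2 hμ
  have h1 := Finset.card_sdiff_add_card_eq_card hsub
  unfold YoungDiagram.card
  rw [← h1]
  congr 1
  refine Finset.card_nbij' (fun c => (m - 1 - c.1, n - 1 - c.2))
    (fun c => (m - 1 - c.1, n - 1 - c.2)) ?_ ?_ ?_ ?_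
  · rintro ⟨i, j⟩ hc
    rw [Finset.mem_coe, YoungDiagram.mem_cells, mem_complement] at hc
    rw [Finset.mem_coe, Finset.mem_sdiff, YoungDiagram.mem_cells, YoungDiagram.mem_cells, mem_rect]
    exact ⟨by omega, hc.2.2⟩
  · rintro ⟨i, j⟩ hc
    rw [Finset.mem_coe, Finset.mem_sdiff, YoungDiagram.mem_cells, YoungDiagram.mem_cells,
      mem_rect] at hc
    rw [Finset.mem_coe, YoungDiagram.mem_cells, mem_complement]
    refine ⟨by omega, by omega, ?_⟩
    rw [show m - 1 - (m - 1 - i) = i by omega, show n - 1 - (n - 1 - j) = j by omega]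
    exact hc.2
  · rintro ⟨i, j⟩ hc
    rw [Finset.mem_coe, YoungDiagram.mem_cells, mem_complement] at hc
    rw [Prod.mk.injEq]
    simp only
    omega
  · rintro ⟨i, j⟩ hc
    rw [Finset.mem_coe, Finset.mem_sdiff, YoungDiagram.mem_cells, YoungDiagram.mem_cells,
      mem_rect] at hc
    rw [Prod.mk.injEq]
    simp only
    omega

theorem restrict_count (m n p : ℕ) (μ : YoungDiagram) (hμ : μ ≤ rect m n) (hp : μ.card = p) :
    Set.ncard {T | IsSyt (rect m n) T ∧ ∀ c, c ∈ rect m n → (T c < p ↔ c ∈ μ)} =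
      sytCount μ * sytCount (complement m n μ) := by
  classical
  unfold sytCount
  rw [← Set.ncard_prod]
  have hcc := card_complement m n μ hμ
  rw [hp] at hcc
  have hin : ∀ c, c ∈ μ → c ∈ rect m n := fun c hc => hμ hc
  have hrot : ∀ i j, (i, j) ∈ complement m n μ →
      (m - 1 - i, n - 1 - j) ∈ rect m n ∧ (m - 1 - i, n - 1 - j) ∉ μ := by
    intro i j h
    rw [mem_complement] at h
    rw [mem_rect]
    exact ⟨by omega, h.2.2⟩
  have hrot' : ∀ i j, (i, j) ∈ rect m n → (i, j) ∉ μ →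
      (m - 1 - i, n - 1 - j) ∈ complement m n μ := by
    intro i j h h'
    rw [mem_rect] at h
    rw [mem_complement, show m - 1 - (m - 1 - i) = i by omega,
      show n - 1 - (n - 1 - j) = j by omega]
    exact ⟨by omega, by omega, h'⟩
  refine Set.ncard_congr (fun T _ => (fun c => if c ∈ μ then T c else 0,
    fun c => if c ∈ complement m n μ then m * n - 1 - T (m - 1 - c.1, n - 1 - c.2) else 0))
    ?_ ?_ ?_
  · rintro T ⟨hT, hTp⟩
    rw [isSyt_iff, card_rect] at hT
    obtain ⟨t1, t2, t3, t4, t5⟩ := hT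
    rw [Set.mem_prod, Set.mem_ofPred_eq, Set.mem_ofPred_eq, isSyt_iff, isSyt_iff]
    simp only
    have hbd : ∀ i j, (i, j) ∈ complement m n μ →
        T (m - 1 - i, n - 1 - j) < m * n ∧ p ≤ T (m - 1 - i, n - 1 - j) := by
      intro i j h
      obtain ⟨h1, h2⟩ := hrot i j h
      refine ⟨t1 _ h1, ?_⟩
      have := hTp _ h1
      by_contra hlt
      exact h2 (this.1 (by omega))
    refine ⟨⟨?_, ?_, ?_, ?_, ?_⟩, ⟨?_, ?_, ?_, ?_, ?_⟩⟩
    · intro c hc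
      rw [if_pos hc, hp]
      exact (hTp c (hin c hc)).2 hc
    · intro c hc d hd
      rw [if_pos hc, if_pos hd]
      exact t2 c (hin c hc) d (hin d hd)
    · intro i j h
      rw [if_pos h, if_pos (μ.up_left_mem le_rfl (by omega) h)]
      exact t3 i j (hin _ h)
    · intro i j h
      rw [if_pos h, if_pos (μ.up_left_mem (by omega) le_rfl h)]
      exact t4 i j (hin _ h)
    · intro c hc
      rw [if_neg hc]
    · rintro ⟨i, j⟩ hc
      rw [if_pos hc]
      have := hbd i j hc
      simp only
      omega
    · rintro ⟨i, j⟩ hc ⟨k, l⟩ hd he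
      rw [if_pos hc, if_pos hd] at he
      have a1 := hbd i j hc
      have a2 := hbd k l hd
      simp only at he
      have := t2 _ (hrot i j hc).1 _ (hrot k l hd).1 (by omega)
      rw [Prod.mk.injEq] at this ⊢
      rw [mem_complement] at hc hd
      omega
    · intro i j h
      have h' : (i, j) ∈ complement m n μ := YoungDiagram.up_left_mem _ le_rfl (by omega) h
      rw [if_pos h, if_pos h']
      have a1 := hbd i j h'
      have a2 := hbd i (j + 1) h
      have a3 := (hrot i j h').1
      have hj := (mem_complement m n μ i (j + 1)).1 h
      have e : n - 1 - j = n - 1 - (j + 1) + 1 := by omega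
      rw [e] at a3 a1 ⊢
      have := t3 _ _ a3
      omega
    · intro i j h
      have h' : (i, j) ∈ complement m n μ := YoungDiagram.up_left_mem _ (by omega) le_rfl h
      rw [if_pos h, if_pos h']
      have a1 := hbd i j h'
      have a2 := hbd (i + 1) j h
      have a3 := (hrot i j h').1
      have hj := (mem_complement m n μ (i + 1) j).1 h
      have e : m - 1 - i = m - 1 - (i + 1) + 1 := by omega
      rw [e] at a3 a1 ⊢
      have := t4 _ _ a3
      omega
    · intro c hc
      rw [if_neg hc]
  · rintro T T' ⟨hT, hTp⟩ ⟨hT', hTp'⟩ he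
    rw [isSyt_iff, card_rect] at hT hT'
    rw [Prod.mk.injEq] at he
    funext ⟨i, j⟩
    by_cases h : (i, j) ∈ μ
    · have := congrFun he.1 (i, j)
      simpa only [if_pos h] using this
    · by_cases h' : (i, j) ∈ rect m n
      · have := congrFun he.2 (m - 1 - i, n - 1 - j)
        simp only [if_pos (hrot' i j h' h)] at this
        have a1 := hT.1 _ h'
        have a2 := hT'.1 _ h'
        rw [mem_rect] at h'
        rw [show m - 1 - (m - 1 - i) = i by omega, show n - 1 - (n - 1 - j) = j by omega] at this
        omega
      · rw [hT.2.2.2.2 _ h', hT'.2.2.2.2 _ h']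
  · rintro ⟨U, V⟩ ⟨hU, hV⟩
    simp only [Set.mem_ofPred_eq] at hU hV
    rw [isSyt_iff, hp] at hU
    rw [isSyt_iff] at hV
    obtain ⟨u1, u2, u3, u4, u5⟩ := hU
    obtain ⟨v1, v2, v3, v4, v5⟩ := hV
    have hval : ∀ i j, (i, j) ∈ rect m n → (i, j) ∉ μ →
        V (m - 1 - i, n - 1 - j) + p < m * n := by
      intro i j h h'
      have := v1 _ (hrot' i j h h')
      omega
    refine ⟨fun c => if c ∈ μ then U c else
      if c ∈ rect m n then m * n - 1 - V (m - 1 - c.1, n - 1 - c.2) else 0, ⟨?_, ?_⟩, ?_⟩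
    · rw [isSyt_iff, card_rect]
      refine ⟨?_, ?_, ?_, ?_, ?_⟩
      · rintro ⟨i, j⟩ hc
        by_cases h : (i, j) ∈ μ
        · simp only [if_pos h]
          have := u1 _ h
          omega
        · simp only [if_neg h, if_pos hc]
          have := hval i j hc h
          omega
      · rintro ⟨i, j⟩ hc ⟨k, l⟩ hd
        by_cases h : (i, j) ∈ μ
        · by_cases h' : (k, l) ∈ μ
          · simp only [if_pos h, if_pos h']
            exact u2 _ h _ h'
          · simp only [if_pos h, if_neg h', if_pos hd]
            have := hval k l hd h'
            have := u1 _ h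
            omega
        · by_cases h' : (k, l) ∈ μ
          · simp only [if_neg h, if_pos h', if_pos hc]
            have := hval i j hc h
            have := u1 _ h'
            omega
          · simp only [if_neg h, if_neg h', if_pos hc, if_pos hd]
            intro he
            have a1 := hval i j hc h
            have a2 := hval k l hd h'
            have := v2 _ (hrot' i j hc h) _ (hrot' k l hd h') (by omega)
            rw [mem_rect] at hc hd
            rw [Prod.mk.injEq] at this ⊢
            omega
      · intro i j h
        have h' : (i, j) ∈ rect m n := YoungDiagram.up_left_mem _ le_rfl (by omega) h
        by_cases hm : (i, j + 1) ∈ μ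
        · have hm' : (i, j) ∈ μ := μ.up_left_mem le_rfl (by omega) hm
          simp only [if_pos hm, if_pos hm']
          exact u3 i j hm
        · have a1 := hval _ _ h hm
          by_cases hm' : (i, j) ∈ μ
          · simp only [if_pos hm', if_neg hm, if_pos h]
            have := u1 _ hm'
            omega
          · simp only [if_neg hm', if_neg hm, if_pos h, if_pos h']
            have a2 := hval _ _ h' hm'
            have a3 := hrot' _ _ h' hm'
            have hj := (mem_rect m n i (j + 1)).1 h
            have e : n - 1 - j = n - 1 - (j + 1) + 1 := by omega
            rw [e] at a2 a3 ⊢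
            have := v3 _ _ a3
            omega
      · intro i j h
        have h' : (i, j) ∈ rect m n := YoungDiagram.up_left_mem _ (by omega) le_rfl h
        by_cases hm : (i + 1, j) ∈ μ
        · have hm' : (i, j) ∈ μ := μ.up_left_mem (by omega) le_rfl hm
          simp only [if_pos hm, if_pos hm']
          exact u4 i j hm
        · have a1 := hval _ _ h hm
          by_cases hm' : (i, j) ∈ μ
          · simp only [if_pos hm', if_neg hm, if_pos h]
            have := u1 _ hm'
            omega
          · simp only [if_neg hm', if_neg hm, if_pos h, if_pos h']
            have a2 := hval _ _ h' hm'
            have a3 := hrot' _ _ h' hm'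
            have hj := (mem_rect m n (i + 1) j).1 h
            have e : m - 1 - i = m - 1 - (i + 1) + 1 := by omega
            rw [e] at a2 a3 ⊢
            have := v4 _ _ a3
            omega
      · intro c hc
        simp only [if_neg hc, if_neg (fun h => hc (hin c h))]
    · rintro ⟨i, j⟩ hc
      by_cases h : (i, j) ∈ μ
      · simp only [h, if_true, iff_true]
        exact u1 _ h
      · simp only [h, if_false, iff_false, if_pos hc]
        have := hval i j hc h
        omega
    · rw [Prod.mk.injEq]
      constructor
      · funext c
        by_cases h : c ∈ μ
        · simp only [if_pos h]
        · simp only [if_neg h, u5 c h]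
      · funext ⟨i, j⟩
        by_cases h : (i, j) ∈ complement m n μ
        · have hr := hrot i j h
          simp only [if_pos h, if_neg hr.2, if_pos hr.1]
          have := v1 _ h
          rw [mem_complement] at h
          rw [show m - 1 - (m - 1 - i) = i by omega, show n - 1 - (n - 1 - j) = j by omega]
          omega
        · simp only [if_neg h, v5 _ h]

/-- The set of shifted row lengths. -/
def betaSet (m : ℕ) (μ : YoungDiagram) : Finset ℕ := univ.image (beta m μ)

theorem syt_formula' (m : ℕ) (μ : YoungDiagram) (h0 : ∀ i, m ≤ i → μ.rowLen i = 0) :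
    (sytCount μ : ℚ) * ∏ a ∈ betaSet m μ, (a.factorial : ℚ) =
      μ.card.factorial * vdm (betaSet m μ) := by
  have := syt_formula m _ μ rfl h0
  rw [dfDet_eq_vdm _ (beta_strictMono m μ)] at this
  rw [betaSet, Finset.prod_image (fun a _ b _ h => (beta_strictMono m μ).injective h), this]

theorem ssyt_formula' (m : ℕ) (μ : YoungDiagram) (h0 : ∀ i, m ≤ i → μ.rowLen i = 0) :
    vdm (range m) * (ssytCount μ m : ℚ) = vdm (betaSet m μ) := by
  have hanti : Antitone μ.rowLen := fun a b h => μ.rowLen_anti a b h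
  rw [ssytCount_eq, ssytSet_formula m _ hanti h0, betaSet,
    ← dfDet_eq_vdm _ (beta_strictMono m μ), dfDet_eq_choose, vdm_range,
    Fin.prod_univ_eq_prod_range (fun i => (i.factorial : ℚ))]
  rfl

/-- the probability `P(λ) = s_λ(1^m) s_{λ'}(1^n) / C(mn,p)` of a random
irreducible component of `Λ^p(ℂ^m ⊗ ℂ^n)` equals the probability that a uniformly random
standard Young tableau of the rectangle `n^m` has its `p` smallest entries forming the
shape `λ`. -/
theorem random_component_eq_random_tableau (m n p : ℕ) (μ : YoungDiagram)
    (hμ : μ ≤ rect m n) (hp : μ.card = p) :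
    (ssytCount μ m * ssytCount μ.transpose n : ℚ) / (m * n).choose p
      = (Set.ncard {T | IsSyt (rect m n) T ∧
            ∀ c, c ∈ rect m n → (T c < p ↔ c ∈ μ)} : ℚ) / sytCount (rect m n) := by
  have hin : ∀ i j, (i, j) ∈ μ → i < m ∧ j < n := fun i j h => (mem_rect m n i j).1 (hμ h)
  have hrow : ∀ i, μ.rowLen i ≤ n := by
    intro i
    by_contra h
    have := (hin i n (by rw [mem_iff_lt_rowLen]; omega)).2
    omega
  have hcol : ∀ j, μ.colLen j ≤ m := by
    intro j
    by_contra h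
    have := (hin m j (by rw [mem_iff_lt_colLen]; omega)).1
    omega
  have h0 : ∀ i, m ≤ i → μ.rowLen i = 0 := by
    intro i hi
    by_contra h
    have := (hin i 0 (by rw [mem_iff_lt_rowLen]; omega)).1
    omega
  have h0' : ∀ j, n ≤ j → μ.transpose.rowLen j = 0 := by
    intro j hj
    rw [rowLen_transpose]
    by_contra h
    have := (hin 0 j (by rw [mem_iff_lt_colLen]; omega)).2
    omega
  have hcrow : ∀ i < m, (complement m n μ).rowLen i = n - μ.rowLen (m - 1 - i) := by
    intro i hi
    apply rowLen_eq_of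
    intro j
    rw [mem_complement, mem_iff_lt_rowLen]
    omega
  have h0c : ∀ i, m ≤ i → (complement m n μ).rowLen i = 0 := by
    intro i hi
    apply rowLen_eq_of
    intro j
    rw [mem_complement]
    omega
  have hrrow : ∀ i < m, (rect m n).rowLen i = n := by
    intro i hi
    apply rowLen_eq_of
    intro j
    rw [mem_rect]
    omega
  have h0r : ∀ i, m ≤ i → (rect m n).rowLen i = 0 := by
    intro i hi
    apply rowLen_eq_of
    intro j
    rw [mem_rect]
    omega
  have hLlt : ∀ a ∈ betaSet m μ, a < m + n := by
    intro a ha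
    obtain ⟨i, _, rfl⟩ := Finset.mem_image.1 ha
    have := hrow (m - 1 - i)
    unfold beta
    omega
  have hLlt' : ∀ a ∈ betaSet n μ.transpose, a < m + n := by
    intro a ha
    obtain ⟨i, _, rfl⟩ := Finset.mem_image.1 ha
    have := hcol (n - 1 - i)
    unfold beta
    rw [rowLen_transpose]
    omega
  have hinj : ∀ A : Finset ℕ, (∀ a ∈ A, a < m + n) →
      Set.InjOn (fun a => m + n - 1 - a) (A : Set ℕ) := by
    intro A hA a ha b hb h
    have := hA a ha
    have := hA b hb
    simp only at h
    omega
  -- the complement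
  have hLc : betaSet m (complement m n μ) = (betaSet m μ).image fun a => m + n - 1 - a := by
    unfold betaSet
    ext x
    simp only [Finset.mem_image, Finset.mem_univ, true_and, exists_exists_eq_and]
    constructor
    · rintro ⟨i, rfl⟩
      refine ⟨⟨m - 1 - i, by omega⟩, ?_⟩
      unfold beta
      rw [hcrow _ (by omega)]
      simp only
      have := hrow (m - 1 - (m - 1 - i))
      omega
    · rintro ⟨i, rfl⟩
      refine ⟨⟨m - 1 - i, by omega⟩, ?_⟩
      unfold beta
      rw [hcrow _ (by omega)]
      simp only
      rw [show m - 1 - (m - 1 - (m - 1 - (i : ℕ))) = m - 1 - i by omega]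
      have := hrow (m - 1 - i)
      omega
  -- the rectangle
  have hLr : betaSet m (rect m n) = (range m).image fun a => n + a := by
    unfold betaSet
    ext x
    simp only [Finset.mem_image, Finset.mem_univ, true_and, Finset.mem_range]
    constructor
    · rintro ⟨i, rfl⟩
      exact ⟨i, i.2, by unfold beta; rw [hrrow _ (by omega)]⟩
    · rintro ⟨i, hi, rfl⟩
      exact ⟨⟨i, hi⟩, by unfold beta; rw [hrrow _ (by omega)]⟩
  -- the transpose
  have hdisj : Disjoint (betaSet m μ)
      ((betaSet n μ.transpose).image fun a => m + n - 1 - a) := by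
    rw [Finset.disjoint_left]
    intro x hx hx'
    obtain ⟨i, _, rfl⟩ := Finset.mem_image.1 hx
    obtain ⟨y, hy, he⟩ := Finset.mem_image.1 hx'
    obtain ⟨j, _, rfl⟩ := Finset.mem_image.1 hy
    unfold beta at he
    rw [rowLen_transpose] at he
    have a1 := hcol (n - 1 - j)
    have a2 := hrow (m - 1 - i)
    have a3 := mem_iff_lt_rowLen (μ := μ) (i := m - 1 - i) (j := n - 1 - j)
    have a4 := mem_iff_lt_colLen (μ := μ) (i := m - 1 - i) (j := n - 1 - j)
    rw [a3] at a4
    omega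
  have hunion : betaSet m μ ∪ ((betaSet n μ.transpose).image fun a => m + n - 1 - a) =
      range (m + n) := by
    apply Finset.eq_of_subset_of_card_le
    · intro x hx
      rw [Finset.mem_range]
      rcases Finset.mem_union.1 hx with h | h
      · exact hLlt x h
      · obtain ⟨y, hy, rfl⟩ := Finset.mem_image.1 h
        have := hLlt' y hy
        omega
    · rw [Finset.card_union_of_disjoint hdisj, Finset.card_image_of_injOn (hinj _ hLlt'),
        betaSet, betaSet, Finset.card_image_of_injective _ (beta_strictMono _ _).injective,
        Finset.card_image_of_injective _ (beta_strictMono _ _).injective]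
      simp
  have hcompl := vdm_compl (m + n) _ _ hdisj hunion
  rw [vdm_reflect _ _ hLlt', Finset.prod_mul_distrib] at hcompl
  have hs1 := ssyt_formula' m μ h0
  have hs2 := ssyt_formula' n μ.transpose h0'
  have hf1 := syt_formula' m μ h0
  have hf2 := syt_formula' m (complement m n μ) h0c
  have hf3 := syt_formula' m (rect m n) h0r
  rw [hLc, Finset.prod_image (hinj _ hLlt), vdm_reflect _ _ hLlt] at hf2
  rw [hLr, vdm_shift, card_rect, Finset.prod_image (by intro a _ b _ h; simpa using h)] at hf3
  have hcc := card_complement m n μ hμ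
  rw [hp] at hcc hf1
  have hVN : vdm (range (m + n)) = vdm (range n) * ∏ i ∈ range m, ((n + i).factorial : ℚ) := by
    rw [vdm_range, vdm_range, add_comm, Finset.prod_range_add]
  have hch : ((m * n).choose p : ℚ) * p.factorial * (complement m n μ).card.factorial =
      (m * n).factorial := by
    have := Nat.choose_mul_factorial_mul_factorial (by omega : p ≤ m * n)
    rw [show m * n - p = (complement m n μ).card by omega] at this
    exact_mod_cast this
  rw [restrict_count m n p μ hμ hp]
  rw [hVN] at hcompl
  have pVm := vdm_pos (range m)
  have pVn := vdm_pos (range n)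
  have pL := vdm_pos (betaSet m μ)
  have pP1 : (0 : ℚ) < ∏ a ∈ betaSet m μ, (a.factorial : ℚ) :=
    Finset.prod_pos fun a _ => by positivity
  have pP2 : (0 : ℚ) < ∏ a ∈ betaSet m μ, ((m + n - 1 - a).factorial : ℚ) :=
    Finset.prod_pos fun a _ => by positivity
  have pP3 : (0 : ℚ) < ∏ i ∈ range m, ((n + i).factorial : ℚ) :=
    Finset.prod_pos fun a _ => by positivity
  have pp : (0 : ℚ) < p.factorial := by positivity
  have pc : (0 : ℚ) < (complement m n μ).card.factorial := by positivity
  have pmn : (0 : ℚ) < (m * n).factorial := by positivity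
  generalize (ssytCount μ m : ℚ) = s1 at *
  generalize (ssytCount μ.transpose n : ℚ) = s2 at *
  push_cast
  generalize (sytCount μ : ℚ) = f1 at *
  generalize (sytCount (complement m n μ) : ℚ) = f2 at *
  generalize (sytCount (rect m n) : ℚ) = f3 at *
  generalize ((m * n).choose p : ℚ) = C at *
  generalize (∏ a ∈ betaSet m μ, (a.factorial : ℚ)) = P1 at *
  generalize (∏ a ∈ betaSet m μ, ((m + n - 1 - a).factorial : ℚ)) = P2 at *
  generalize (∏ i ∈ range m, ((n + i).factorial : ℚ)) = P3 at *
  generalize vdm (range m) = Vm at *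
  generalize vdm (range n) = Vn at *
  generalize vdm (betaSet m μ) = L at *
  generalize vdm (betaSet n μ.transpose) = L' at *
  generalize (p.factorial : ℚ) = Fp at *
  generalize ((complement m n μ).card.factorial : ℚ) = Fc at *
  generalize ((m * n).factorial : ℚ) = F at *
  have e1 : s1 = L / Vm := by rw [eq_div_iff pVm.ne', mul_comm, hs1]
  have e2 : s2 = L * P3 / (P1 * P2) := by
    rw [eq_div_iff (by positivity)]
    apply mul_left_cancel₀ pVn.ne'
    linear_combination (P1 * P2) * hs2 + hcompl
  have e3 : f1 = Fp * L / P1 := by rw [eq_div_iff pP1.ne', hf1]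
  have e4 : f2 = Fc * L / P2 := by rw [eq_div_iff pP2.ne', hf2]
  have e5 : f3 = F * Vm / P3 := by rw [eq_div_iff pP3.ne', hf3]
  have e6 : C = F / (Fp * Fc) := by rw [eq_div_iff (by positivity), ← hch]; ring
  rw [e1, e2, e3, e4, e5, e6]
  field_simp
end
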